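/- arXiv:1508.00345 — 7 statements merged into one kernel-verified Lean document; each statement's English description precedes it below -/
import Mathlib

section
/- Let R be a Bezout domain of Krull dimension at most 1. Then R is a Smith ring: for every matrix A ∈ M_{n×m}(R) there exist invertible matrices L ∈ GL_n(R) and C ∈ GL_m(R) such that the matrix B = L·A·C is in Smith form, i.e., B i j = 0 whenever the indices i and j are distinct (as natural numbers), and the diagonal entry B i i divides the diagonal entry B j j whenever i ≤ j. -/
theorem aux_pow {R : Type*} [CommRing R] [IsDomain R]
    (hdim : ∀ p q r : Ideal R, p.IsPrime → q.IsPrime → r.IsPrime → p < q → q < r → False)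
    (a b : R) (ha : a ≠ 0) : ∃ (N : ℕ) (x : R), a ∣ b ^ N * (1 - b * x) := by
  by_contra! hcon
  let S : Submonoid R :=
    { carrier := {y | ∃ (N : ℕ) (x : R), y = b ^ N * (1 - b * x)}
      one_mem' := ⟨0, 0, by simp⟩
      mul_mem' := by
        rintro _ _ ⟨N, x, rfl⟩ ⟨M, y, rfl⟩
        exact ⟨N + M, x + y - b * x * y, by ring⟩ }
  have hdis : Disjoint (Ideal.span {a} : Set R) (S : Set R) := by
    rw [Set.disjoint_left]
    rintro y hy ⟨N, x, rfl⟩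
    exact hcon N x (Ideal.mem_span_singleton.1 hy)
  obtain ⟨P, hP, haP, hPS⟩ := Ideal.exists_le_prime_disjoint _ S hdis
  rw [Set.disjoint_left] at hPS
  have haP' : a ∈ P := haP (Ideal.mem_span_singleton_self a)
  have hbP : b ∉ P := fun h => hPS h ⟨1, 0, by simp⟩
  have hne : P ⊔ Ideal.span {b} ≠ ⊤ := by
    intro h
    have h1 : (1 : R) ∈ P ⊔ Ideal.span {b} := by rw [h]; trivial
    obtain ⟨y, hy, z, hz, hyz⟩ := Submodule.mem_sup.1 h1
    obtain ⟨x, rfl⟩ := Ideal.mem_span_singleton.1 hz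
    exact hPS hy ⟨0, x, by rw [← hyz]; ring⟩
  obtain ⟨M, hM, hPM⟩ := Ideal.exists_le_maximal _ hne
  refine hdim ⊥ P M Ideal.isPrime_bot hP hM.isPrime ?_ ?_
  · exact bot_lt_iff_ne_bot.2 fun h => ha (by simpa [h] using haP')
  · refine lt_of_le_of_ne (le_sup_left.trans hPM) ?_
    rintro rfl
    exact hbP (hPM (Ideal.mem_sup_right (Ideal.mem_span_singleton_self b)))

theorem aux_kap {R : Type*} [CommRing R] [IsDomain R]
    (hdim : ∀ p q r : Ideal R, p.IsPrime → q.IsPrime → r.IsPrime → p < q → q < r → False)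
    (a b c : R) (ha : a ≠ 0) (h : ∃ x y z : R, x * a + y * b + z * c = 1) :
    ∃ q, IsCoprime a (b + q * c) := by
  obtain ⟨N, x, hx⟩ := aux_pow hdim a b ha
  obtain ⟨s, t, z, hst⟩ := h
  refine ⟨1 - b * x, ?_⟩
  by_contra hcon
  rw [← Ideal.isCoprime_span_singleton_iff, Ideal.isCoprime_iff_sup_eq] at hcon
  obtain ⟨M, hM, hle⟩ := Ideal.exists_le_maximal _ hcon
  have hMp := hM.isPrime
  have h1 : a ∈ M := hle (Ideal.mem_sup_left (Ideal.mem_span_singleton_self _))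
  have h2 : b + (1 - b * x) * c ∈ M := hle (Ideal.mem_sup_right (Ideal.mem_span_singleton_self _))
  have h3 := M.mem_of_dvd hx h1
  have hone : (1 : R) ∉ M := fun h => hM.ne_top ((Ideal.eq_top_iff_one _).2 h)
  have hb : b ∈ M → False := by
    intro hb
    apply hone
    have hc : c ∈ M := by
      have := M.sub_mem h2 (M.mul_mem_left (1 - x * c) hb)
      convert this using 1; ring
    rw [← hst]
    exact M.add_mem (M.add_mem (M.mul_mem_left _ h1) (M.mul_mem_left _ hb)) (M.mul_mem_left _ hc)
  rcases hMp.mem_or_mem h3 with h4 | h4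
  · exact hb (hMp.mem_of_pow_mem _ h4)
  · apply hb
    have := M.sub_mem h2 (M.mul_mem_right c h4)
    convert this using 1; ring

/-- 2x2 step -/
theorem aux_two {R : Type*} [CommRing R] [IsDomain R] [IsBezout R]
    (hdim : ∀ p q r : Ideal R, p.IsPrime → q.IsPrime → r.IsPrime → p < q → q < r → False)
    (a b c : R) : ∃ s t y z g : R, g = s * (b * y + a * z) + t * c * y ∧ g ∣ a ∧ g ∣ b ∧ g ∣ c := by
  by_cases ha : a = 0
  · subst ha
    obtain ⟨g, hg⟩ := (IsBezout.span_pair_isPrincipal b c).principal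
    have hg' : Ideal.span {b, c} = Ideal.span {g} := hg
    have hgm : g ∈ Ideal.span {b, c} := by rw [hg']; exact Ideal.mem_span_singleton_self _
    obtain ⟨s, t, hst⟩ := Ideal.mem_span_pair.1 hgm
    refine ⟨s, t, 1, 0, g, by rw [← hst]; ring, dvd_zero _, ?_, ?_⟩ <;>
    · rw [← Ideal.mem_span_singleton, ← hg']
      exact Ideal.subset_span (by simp)
  · have hfg : (Ideal.span {a, b, c}).FG :=
      Submodule.fg_span (Set.toFinite _)
    obtain ⟨g, hg⟩ := (IsBezout.isPrincipal_of_FG _ hfg).principal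
    have hg' : Ideal.span {a, b, c} = Ideal.span {g} := hg
    have hgm : g ∈ Ideal.span {a, b, c} := by rw [hg']; exact Ideal.mem_span_singleton_self _
    have hd : ∀ w ∈ ({a, b, c} : Set R), g ∣ w := by
      intro w hw
      rw [← Ideal.mem_span_singleton, ← hg']
      exact Ideal.subset_span hw
    obtain ⟨a', ha'⟩ := hd a (by simp)
    obtain ⟨b', hb'⟩ := hd b (by simp)
    obtain ⟨c', hc'⟩ := hd c (by simp)
    have hg0 : g ≠ 0 := by rintro rfl; simp at ha'; exact ha ha'
    have ha0 : a' ≠ 0 := by rintro rfl; simp at ha'; exact ha ha'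
    obtain ⟨x, y, z, hxyz⟩ : ∃ x y z : R, x * a + y * b + z * c = g := by
      obtain ⟨x, w, hw, hx⟩ := Ideal.mem_span_insert.1 hgm
      obtain ⟨y, z, hyz⟩ := Ideal.mem_span_pair.1 hw
      exact ⟨x, y, z, by rw [hx, ← hyz]; ring⟩
    obtain ⟨q, k, l, hq⟩ := aux_kap hdim a' b' c' ha0 ⟨x, y, z, by
      apply mul_left_cancel₀ hg0
      rw [ha', hb', hc'] at hxyz
      linear_combination hxyz⟩
    refine ⟨1, q, l, k, g, ?_, ⟨a', ha'⟩, ⟨b', hb'⟩, ⟨c', hc'⟩⟩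
    rw [ha', hb', hc']
    linear_combination (-g) * hq

theorem aux_range {R : Type*} [CommRing R] [IsBezout R] {N : Type*} [AddCommGroup N]
    [Module R N] [Module.Finite R N] (h : N →ₗ[R] R) : ∃ v, ∀ w, h v ∣ h w := by
  have hfg : (LinearMap.range h).FG := by
    rw [LinearMap.range_eq_map]; exact Module.Finite.fg_top.map h
  obtain ⟨g, hg⟩ := (IsBezout.isPrincipal_of_FG (LinearMap.range h) hfg).principal
  have hgm : g ∈ LinearMap.range h := by rw [hg]; exact Submodule.mem_span_singleton_self _
  obtain ⟨v, rfl⟩ := hgm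
  refine ⟨v, fun w => ?_⟩
  have : h w ∈ LinearMap.range h := ⟨w, rfl⟩
  rw [hg] at this
  exact Ideal.mem_span_singleton.1 this

theorem aux_bil {R : Type*} [CommRing R] [IsDomain R] [IsBezout R]
    (hdim : ∀ p q r : Ideal R, p.IsPrime → q.IsPrime → r.IsPrime → p < q → q < r → False)
    {N : Type*} [AddCommGroup N] [Module R N] [Module.Finite R N] (n : ℕ)
    (a : Fin n → N →ₗ[R] R) :
    ∃ (u : Fin n → R) (v : N), ∀ i w, (∑ j, u j * a j v) ∣ a i w := by
  induction n with
  | zero => exact ⟨0, 0, fun i => i.elim0⟩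
  | succ n ih =>
    obtain ⟨u, v, huv⟩ := ih (fun i => a i.succ)
    set d := ∑ j, u j * a j.succ v with hd
    by_cases hd0 : d = 0
    · obtain ⟨w, hw⟩ := aux_range (a 0)
      refine ⟨Pi.single 0 1, w, fun i => ?_⟩
      rw [Fin.sum_univ_succ]
      refine Fin.cases ?_ (fun i => ?_) i
      · simpa using hw
      · intro w'
        have := huv i w'
        rw [hd0, zero_dvd_iff] at this
        rw [this]; exact dvd_zero _
    · let g : N →ₗ[R] R := ∑ j, u j • a j.succ
      have hg : ∀ w, g w = ∑ j, u j * a j.succ w := fun w => by simp [g]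
      have hdg : ∀ w, d ∣ g w := fun w => by
        rw [hg]; exact Finset.dvd_sum fun j _ => (huv j w).mul_left _
      choose g' hg' using hdg
      have hgv : g' v = 1 := by
        apply mul_left_cancel₀ hd0
        rw [← hg', hg, mul_one]
      let g'' : N →ₗ[R] R :=
        { toFun := g'
          map_add' := fun x y => by
            apply mul_left_cancel₀ hd0
            rw [← hg', mul_add, ← hg', ← hg', map_add]
          map_smul' := fun r x => by
            apply mul_left_cancel₀ hd0
            simp only [RingHom.id_apply, smul_eq_mul]
            rw [← hg', mul_left_comm, ← hg', map_smul, smul_eq_mul] }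
      let h : N →ₗ[R] R := a 0 - (a 0 v) • g''
      have hh : ∀ w, h w = a 0 w - a 0 v * g' w := fun w => rfl
      obtain ⟨w0, hw0⟩ := aux_range h
      obtain ⟨s, t, y, z, e, he, h1, h2, h3⟩ := aux_two hdim (h w0) (a 0 v) d
      refine ⟨Fin.cons s (fun i => t * u i), y • v + z • (w0 - g' w0 • v), fun i w => ?_⟩
      have hsum : (∑ j, (Fin.cons s (fun i => t * u i) : Fin (n+1) → R) j *
          a j (y • v + z • (w0 - g' w0 • v))) = e := by
        rw [Fin.sum_univ_succ]
        simp only [Fin.cons_zero, Fin.cons_succ, mul_assoc]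
        rw [← Finset.mul_sum, ← hg]
        have e1 : g v = d := by rw [hg]
        have e2 : g w0 = d * g' w0 := hg' w0
        simp only [map_add, map_smul, map_sub, smul_eq_mul, e1, e2]
        rw [he, hh]; ring
      rw [hsum]
      revert w
      refine Fin.cases ?_ (fun i => ?_) i
      · intro w
        have : a 0 w = h w + a 0 v * g' w := by rw [hh]; ring
        rw [this]
        exact dvd_add (h1.trans (hw0 w)) (h2.mul_right _)
      · intro w
        exact h3.trans (huv i w)

theorem aux_pair {R : Type*} [CommRing R] [IsDomain R] [IsBezout R] (a b : R) :
    ∃ p q s t g : R, a = g * p ∧ b = g * q ∧ p * s + q * t = 1 := by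
  obtain ⟨g, hg⟩ := (IsBezout.span_pair_isPrincipal a b).principal
  have hg' : Ideal.span {a, b} = Ideal.span {g} := hg
  have hgm : g ∈ Ideal.span {a, b} := by rw [hg']; exact Ideal.mem_span_singleton_self _
  obtain ⟨s, t, hst⟩ := Ideal.mem_span_pair.1 hgm
  have hd : ∀ w ∈ ({a, b} : Set R), g ∣ w := by
    intro w hw
    rw [← Ideal.mem_span_singleton, ← hg']
    exact Ideal.subset_span hw
  obtain ⟨p, hp⟩ := hd a (by simp)
  obtain ⟨q, hq⟩ := hd b (by simp)
  by_cases hg0 : g = 0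
  · exact ⟨1, 0, 1, 0, 0, by simp [hp, hg0], by simp [hq, hg0], by simp⟩
  · refine ⟨p, q, s, t, g, hp, hq, mul_left_cancel₀ hg0 ?_⟩
    rw [hp, hq] at hst
    linear_combination hst

theorem aux_elim {R : Type*} [CommRing R] [IsDomain R] [IsBezout R] {n : ℕ}
    (u : Fin n → R) (i0 : Fin n) (S : Finset (Fin n)) (hS : i0 ∉ S) :
    ∃ e : (Fin n → R) ≃ₗ[R] (Fin n → R), ∀ i ∈ S, e u i = 0 := by
  induction S using Finset.induction_on with
  | empty => exact ⟨LinearEquiv.refl _ _, by simp⟩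
  | insert j S hj ih =>
    rw [Finset.mem_insert, not_or] at hS
    obtain ⟨e, he⟩ := ih hS.2
    have hne : j ≠ i0 := fun h => hS.1 h.symm
    obtain ⟨p, q, s, t, g, h1, h2, h3⟩ := aux_pair (e u i0) (e u j)
    let f : (Fin n → R) ≃ₗ[R] (Fin n → R) :=
      { toFun := fun w k => if k = i0 then s * w i0 + t * w j else
          if k = j then - q * w i0 + p * w j else w k
        invFun := fun w k => if k = i0 then p * w i0 - t * w j else
          if k = j then q * w i0 + s * w j else w k
        map_add' := fun x y => by ext k; simp only [Pi.add_apply]; split_ifs <;> ring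
        map_smul' := fun x y => by
          ext k; simp only [Pi.smul_apply, smul_eq_mul, RingHom.id_apply]; split_ifs <;> ring
        left_inv := fun w => by
          ext k
          simp only [hne, if_true, if_false]
          split_ifs with hk hk'
          · subst hk; linear_combination (w k) * h3
          · subst hk'; linear_combination (w k) * h3
          · rfl
        right_inv := fun w => by
          ext k
          simp only [hne, if_true, if_false]
          split_ifs with hk hk'
          · subst hk; linear_combination (w k) * h3
          · subst hk'; linear_combination (w k) * h3
          · rfl }
    have hf : ∀ w k, f w k = if k = i0 then s * w i0 + t * w j else
          if k = j then - q * w i0 + p * w j else w k := fun _ _ => rfl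
    refine ⟨e.trans f, fun i hi => ?_⟩
    rw [LinearEquiv.trans_apply, hf]
    rcases Finset.mem_insert.1 hi with rfl | hi'
    · rw [if_neg hne, if_pos rfl, h1, h2]; ring
    · rw [if_neg (by rintro rfl; exact hS.2 hi'), if_neg (by rintro rfl; exact hj hi'), he i hi']

/-- every vector is a multiple of the first column of an invertible matrix -/
theorem aux_col {R : Type*} [CommRing R] [IsDomain R] [IsBezout R] {n : ℕ}
    (u : Fin (n + 1) → R) :
    ∃ (L : Matrix (Fin (n + 1)) (Fin (n + 1)) R) (c : R), IsUnit L ∧ ∀ i, u i = c * L i 0 := by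
  obtain ⟨e, he⟩ := aux_elim u 0 (Finset.univ.erase 0) (by simp)
  have h0 : e u = e u 0 • Pi.single 0 1 := by
    ext i
    by_cases hi : i = 0
    · subst hi; simp
    · rw [he i (by simp [hi])]; simp [hi]
  refine ⟨LinearMap.toMatrix' e.symm.toLinearMap, e u 0, ?_, fun i => ?_⟩
  · refine IsUnit.of_mul_eq_one (LinearMap.toMatrix' e.toLinearMap) ?_
    rw [← LinearMap.toMatrix'_comp]; simp
  · have : u = e.symm (e u 0 • Pi.single 0 1) := by rw [← h0]; simp
    conv_lhs => rw [this]
    rw [map_smul, LinearMap.toMatrix'_apply]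
    simp

def blk {R : Type*} {n m : ℕ} (a : R) (r : Fin m → R) (c : Fin n → R)
    (X : Matrix (Fin n) (Fin m) R) : Matrix (Fin (n + 1)) (Fin (m + 1)) R :=
  Matrix.of (Fin.cons (Fin.cons a r) (fun i => Fin.cons (c i) (X i)))

section
variable {R : Type*} {n m : ℕ} (a : R) (r : Fin m → R) (c : Fin n → R)
    (X : Matrix (Fin n) (Fin m) R)
@[simp] theorem blk_zz : blk a r c X 0 0 = a := rfl
@[simp] theorem blk_zs (j) : blk a r c X 0 (Fin.succ j) = r j := rfl
@[simp] theorem blk_sz (i) : blk a r c X (Fin.succ i) 0 = c i := rfl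
@[simp] theorem blk_ss (i j) : blk a r c X (Fin.succ i) (Fin.succ j) = X i j := rfl
end

theorem blk_unit {R : Type*} [CommRing R] {n : ℕ} {L : Matrix (Fin n) (Fin n) R}
    (h : IsUnit L) : IsUnit (blk 1 0 0 L) := by
  obtain ⟨M, hM⟩ := h.exists_right_inv
  refine IsUnit.of_mul_eq_one (blk 1 0 0 M) ?_
  ext i j
  have := fun i j => congrFun (congrFun hM i) j
  simp only [Matrix.mul_apply] at this
  refine Fin.cases ?_ (fun i => ?_) i <;> refine Fin.cases ?_ (fun j => ?_) j <;>
    simp [Matrix.mul_apply, Fin.sum_univ_succ, this, Matrix.one_apply, Fin.succ_ne_zero,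
      (Fin.succ_ne_zero _).symm]

theorem blk_unit_c {R : Type*} [CommRing R] {n : ℕ} (c : Fin n → R) :
    IsUnit (blk 1 0 c (1 : Matrix (Fin n) (Fin n) R)) := by
  refine IsUnit.of_mul_eq_one (blk 1 0 (-c) 1) ?_
  ext i j
  refine Fin.cases ?_ (fun i => ?_) i <;> refine Fin.cases ?_ (fun j => ?_) j <;>
    simp [Matrix.mul_apply, Fin.sum_univ_succ, Matrix.one_apply, Fin.succ_ne_zero,
      (Fin.succ_ne_zero _).symm]

theorem blk_unit_r {R : Type*} [CommRing R] {n : ℕ} (c : Fin n → R) :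
    IsUnit (blk 1 c 0 (1 : Matrix (Fin n) (Fin n) R)) := by
  refine IsUnit.of_mul_eq_one (blk 1 (-c) 0 1) ?_
  ext i j
  refine Fin.cases ?_ (fun i => ?_) i <;> refine Fin.cases ?_ (fun j => ?_) j <;>
    simp [Matrix.mul_apply, Fin.sum_univ_succ, Matrix.one_apply, Fin.succ_ne_zero,
      (Fin.succ_ne_zero _).symm]

theorem aux_dvd {R : Type*} [CommRing R] {n m k l : ℕ} (d : R) (A : Matrix (Fin n) (Fin m) R)
    (hA : ∀ i j, d ∣ A i j) (L : Matrix (Fin k) (Fin n) R) (C : Matrix (Fin m) (Fin l) R) (i j) :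
    d ∣ (L * A * C) i j := by
  simp only [Matrix.mul_apply]
  exact Finset.dvd_sum fun x _ => Dvd.dvd.mul_right
    (Finset.dvd_sum fun y _ => (hA _ _).mul_left _) _

/-- reduction to block form -/
theorem aux_red {R : Type*} [CommRing R] [IsDomain R] [IsBezout R]
    (hdim : ∀ p q r : Ideal R, p.IsPrime → q.IsPrime → r.IsPrime → p < q → q < r → False)
    {n m : ℕ} (A : Matrix (Fin (n + 1)) (Fin (m + 1)) R) :
    ∃ (L : Matrix (Fin (n + 1)) (Fin (n + 1)) R) (C : Matrix (Fin (m + 1)) (Fin (m + 1)) R)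
      (d : R) (X : Matrix (Fin n) (Fin m) R),
      IsUnit L ∧ IsUnit C ∧ L * A * C = blk d 0 0 X ∧ ∀ i j, d ∣ X i j := by
  obtain ⟨u, v, huv⟩ := aux_bil hdim (n + 1) (fun i => LinearMap.proj i ∘ₗ A.mulVecLin)
  obtain ⟨L, c, hL, hc⟩ := aux_col u
  obtain ⟨C, c', hC, hc'⟩ := aux_col v
  set e := ∑ j, u j * (LinearMap.proj j ∘ₗ A.mulVecLin) v with he
  have heA : ∀ i j, e ∣ A i j := fun i j => by
    have := huv i (Pi.single j 1)
    simpa using this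
  set B := L.transpose * A * C with hB
  have heB : ∀ i j, e ∣ B i j := aux_dvd e A heA _ _
  have hBe : B 0 0 ∣ e := by
    refine ⟨c * c', ?_⟩
    rw [he, hB, Matrix.mul_assoc]
    simp only [LinearMap.comp_apply, LinearMap.proj_apply, Matrix.mulVecLin_apply,
      Matrix.mulVec, dotProduct, hc, hc', Matrix.mul_apply,
      Matrix.transpose_apply, Finset.sum_mul, Finset.mul_sum]
    refine Finset.sum_congr rfl fun i _ => Finset.sum_congr rfl fun j _ => ?_
    ring
  have hBB : ∀ i j, B 0 0 ∣ B i j := fun i j => hBe.trans (heB i j)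
  choose Q hQ using hBB
  have hmul : blk 1 0 (fun i : Fin n => - Q i.succ 0) (1 : Matrix (Fin n) (Fin n) R) * B * blk 1 (fun j : Fin m => - Q 0 j.succ) 0 (1 : Matrix (Fin m) (Fin m) R)
      = blk (B 0 0) 0 0 (Matrix.of fun i j => B i.succ j.succ - Q i.succ 0 * B 0 j.succ) := by
    have h1 : blk 1 0 (fun i : Fin n => - Q i.succ 0) (1 : Matrix (Fin n) (Fin n) R) * B =
        blk (B 0 0) (fun j => B 0 j.succ) 0
          (Matrix.of fun i j => B i.succ j.succ - Q i.succ 0 * B 0 j.succ) := by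
      ext i j
      refine Fin.cases ?_ (fun i => ?_) i <;> refine Fin.cases ?_ (fun j => ?_) j
      · simp [Matrix.mul_apply, Fin.sum_univ_succ]
      · simp [Matrix.mul_apply, Fin.sum_univ_succ]
      · simp [Matrix.mul_apply, Fin.sum_univ_succ, Matrix.one_apply]
        rw [hQ i.succ 0]; ring
      · simp [Matrix.mul_apply, Fin.sum_univ_succ, Matrix.one_apply]
        ring
    rw [h1]
    ext i j
    refine Fin.cases ?_ (fun i => ?_) i <;> refine Fin.cases ?_ (fun j => ?_) j
    · simp [Matrix.mul_apply, Fin.sum_univ_succ]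
    · simp [Matrix.mul_apply, Fin.sum_univ_succ, Matrix.one_apply]
      rw [hQ 0 j.succ]; ring
    · simp [Matrix.mul_apply, Fin.sum_univ_succ]
    · simp [Matrix.mul_apply, Fin.sum_univ_succ, Matrix.one_apply]
  refine ⟨blk 1 0 (fun i : Fin n => - Q i.succ 0) (1 : Matrix (Fin n) (Fin n) R) * L.transpose,
    C * blk 1 (fun j : Fin m => - Q 0 j.succ) 0 (1 : Matrix (Fin m) (Fin m) R), B 0 0,
    Matrix.of fun i j => B i.succ j.succ - Q i.succ 0 * B 0 j.succ, ?_, ?_, ?_, ?_⟩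
  rotate_left 2
  · rw [← hmul, hB]; simp only [Matrix.mul_assoc]
  · intro i j
    exact dvd_sub ⟨_, hQ _ _⟩ (Dvd.dvd.mul_left ⟨_, hQ _ _⟩ _)
  · exact (blk_unit_c _).mul ((Matrix.isUnit_transpose _).2 hL)
  · exact hC.mul (blk_unit_r _)

/-- A Bezout domain of Krull dimension at most 1 is a Smith ring: every matrix is
equivalent to a matrix in Smith form. -/
theorem stmt_0 {R : Type*} [CommRing R] [IsDomain R] [IsBezout R]
    (hdim : ∀ p q r : Ideal R, p.IsPrime → q.IsPrime → r.IsPrime → p < q → q < r → False)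
    {n m : ℕ} (A : Matrix (Fin n) (Fin m) R) :
    ∃ (L : Matrix (Fin n) (Fin n) R) (C : Matrix (Fin m) (Fin m) R),
      IsUnit L ∧ IsUnit C ∧
      (∀ (i : Fin n) (j : Fin m), (i : ℕ) ≠ (j : ℕ) → (L * A * C) i j = 0) ∧
      (∀ (i j : ℕ) (hin : i < n) (him : i < m) (hjn : j < n) (hjm : j < m), i ≤ j →
        (L * A * C) ⟨i, hin⟩ ⟨i, him⟩ ∣ (L * A * C) ⟨j, hjn⟩ ⟨j, hjm⟩) := by
  induction n generalizing m with
  | zero =>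
    exact ⟨1, 1, isUnit_one, isUnit_one, fun i => i.elim0,
      fun i j hin => absurd hin (Nat.not_lt_zero _)⟩
  | succ n ih =>
    cases m with
    | zero =>
      exact ⟨1, 1, isUnit_one, isUnit_one, fun _ j => j.elim0,
        fun i j _ him => absurd him (Nat.not_lt_zero _)⟩
    | succ m =>
      obtain ⟨L, C, d, X, hL, hC, hX, hdX⟩ := aux_red hdim A
      obtain ⟨L', C', hL', hC', h1, h2⟩ := ih X
      have hd := aux_dvd d X hdX L' C'
      have key : blk 1 0 0 L' * L * A * (C * blk 1 0 0 C') = blk d 0 0 (L' * X * C') := by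
        have : blk 1 0 0 L' * L * A * (C * blk 1 0 0 C') =
            blk 1 0 0 L' * (L * A * C) * blk 1 0 0 C' := by simp only [Matrix.mul_assoc]
        rw [this, hX]
        ext i j
        refine Fin.cases ?_ (fun i => ?_) i <;> refine Fin.cases ?_ (fun j => ?_) j <;>
          simp [Matrix.mul_apply, Fin.sum_univ_succ]
      refine ⟨blk 1 0 0 L' * L, C * blk 1 0 0 C', (blk_unit hL').mul hL, hC.mul (blk_unit hC'),
        ?_, ?_⟩
      · rw [key]
        intro i j
        refine Fin.cases ?_ (fun i => ?_) i <;> refine Fin.cases ?_ (fun j => ?_) j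
        · simp
        · simp
        · simp
        · intro hij
          exact h1 i j (by simpa using hij)
      · rw [key]
        intro i j hin him hjn hjm hij
        cases i with
        | zero =>
          cases j with
          | zero => exact dvd_rfl
          | succ j => exact hd ⟨j, by omega⟩ ⟨j, by omega⟩
        | succ i =>
          cases j with
          | zero => omega
          | succ j =>
            exact h2 i j (by omega) (by omega) (by omega) (by omega) (by omega)
end

section
/- Let R be a Prüfer domain, A ∈ M_{n×m}(R) and B ∈ R^n (viewed as a column). Then the linear system A·X = B has a solution X ∈ R^m if and only if for every k ≥ 1 the determinantal ideal of order k of the augmented matrix [A | B] (of size n×(m+1)) equals the determinantal ideal of order k of A, i.e., D_k([A|B]) = D_k(A) for all k. -/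
/-- The determinantal ideal of order `k` of a matrix: the ideal generated by all
`k × k` minors. -/
def detIdeal {R : Type*} [CommRing R] {n m : ℕ}
    (M : Matrix (Fin n) (Fin m) R) (k : ℕ) : Ideal R :=
  Ideal.span { x : R | ∃ (r : Fin k → Fin n) (c : Fin k → Fin m),
    x = (M.submatrix r c).det }

/-- The augmented matrix `[A | B]`. -/
def augment {R : Type*} [CommRing R] {n m : ℕ}
    (A : Matrix (Fin n) (Fin m) R) (B : Fin n → R) : Matrix (Fin n) (Fin (m + 1)) R :=
  Matrix.of fun i j => if h : (j : ℕ) < m then A i ⟨j, h⟩ else B i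

theorem det_mul_mem_aux {R : Type*} [CommRing R] {n m k : ℕ}
    (A : Matrix (Fin n) (Fin m) R) (r : Fin k → Fin n) (N : Matrix (Fin m) (Fin k) R) :
    (A.submatrix r id * N).det ∈ detIdeal A k := by
  have h : (A.submatrix r id * N).det
      = ∑ f : Fin k → Fin m, (∏ i, N (f i) i) * (A.submatrix r f).det := by
    rw [← Matrix.det_transpose]
    have h1 : (A.submatrix r id * N).transpose
        = fun i => ∑ j : Fin m, N j i • (fun a => A (r a) j) := by
      funext i a
      simp [Matrix.mul_apply, Finset.sum_apply, mul_comm]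
    have h2 := (Matrix.detRowAlternating (n := Fin k) (R := R)).toMultilinearMap.map_sum
      (fun i (j : Fin m) => N j i • (fun a => A (r a) j))
    rw [h1]
    refine h2.trans (Finset.sum_congr rfl fun f _ => ?_)
    rw [MultilinearMap.map_smul_univ, smul_eq_mul, ← Matrix.det_transpose (A.submatrix r f)]
    rfl
  rw [h]
  exact Ideal.sum_mem _ fun f _ => Ideal.mul_mem_left _ _ (Ideal.subset_span ⟨r, f, rfl⟩)

theorem augment_last {R : Type*} [CommRing R] {n m : ℕ}
    (A : Matrix (Fin n) (Fin m) R) (B : Fin n → R) (i : Fin n) :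
    augment A B i (Fin.last m) = B i := by
  simp [augment]

theorem augment_castSucc {R : Type*} [CommRing R] {n m : ℕ}
    (A : Matrix (Fin n) (Fin m) R) (B : Fin n → R) (i : Fin n) (j : Fin m) :
    augment A B i j.castSucc = A i j := by
  simp [augment]

theorem detIdeal_le_augment {R : Type*} [CommRing R] {n m : ℕ}
    (A : Matrix (Fin n) (Fin m) R) (B : Fin n → R) (k : ℕ) :
    detIdeal A k ≤ detIdeal (augment A B) k := by
  refine Ideal.span_le.2 ?_
  rintro x ⟨r, c, rfl⟩
  refine Ideal.subset_span ⟨r, fun i => (c i).castSucc, ?_⟩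
  congr 1
  ext i j
  simp [augment_castSucc]

theorem detIdeal_augment_le {R : Type*} [CommRing R] {n m : ℕ}
    (A : Matrix (Fin n) (Fin m) R) (X : Fin m → R) (k : ℕ) :
    detIdeal (augment A (A.mulVec X)) k ≤ detIdeal A k := by
  refine Ideal.span_le.2 ?_
  rintro x ⟨r, c, rfl⟩
  have : (augment A (A.mulVec X)).submatrix r c
      = A.submatrix r id * (augment (1 : Matrix (Fin m) (Fin m) R) X).submatrix id c := by
    ext i j
    rw [Matrix.mul_apply]
    simp only [Matrix.submatrix_apply, id]
    induction c j using Fin.lastCases with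
    | last => simp [augment_last, Matrix.mulVec, dotProduct]
    | cast l => simp [augment_castSucc, Matrix.one_apply]
  rw [this]
  exact det_mul_mem_aux A r _

theorem detIdeal_zero {R : Type*} [CommRing R] {n m : ℕ}
    (A : Matrix (Fin n) (Fin m) R) : detIdeal A 0 = ⊤ := by
  rw [Ideal.eq_top_iff_one]
  exact Ideal.subset_span ⟨Fin.elim0, Fin.elim0, by simp⟩

theorem detIdeal_fg {R : Type*} [CommRing R] {n m : ℕ}
    (A : Matrix (Fin n) (Fin m) R) (k : ℕ) : (detIdeal A k).FG := by
  refine Submodule.fg_span ?_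
  refine (Set.finite_range (fun p : (Fin k → Fin n) × (Fin k → Fin m) =>
    (A.submatrix p.1 p.2).det)).subset ?_
  rintro x ⟨r, c, rfl⟩
  exact ⟨(r, c), rfl⟩

theorem detIdeal_big {R : Type*} [CommRing R] {n m : ℕ}
    (A : Matrix (Fin n) (Fin m) R) : detIdeal A (m + 1) = ⊥ := by
  refine Ideal.span_eq_bot.2 ?_
  rintro x ⟨r, c, rfl⟩
  obtain ⟨i, j, hij, h⟩ := Fintype.exists_ne_map_eq_of_card_lt c (by simp)
  exact Matrix.det_zero_of_column_eq hij (fun a => by simp [h])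

/-- Cramer's rule for a minor of maximal order. -/
theorem cramer_minor {R : Type*} [CommRing R] {n m k : ℕ}
    (A : Matrix (Fin n) (Fin m) R) (B : Fin n → R)
    (h0 : detIdeal (augment A B) (k + 1) = ⊥)
    (r : Fin k → Fin n) (c : Fin k → Fin m) :
    ∃ X : Fin m → R, A.mulVec X = (A.submatrix r c).det • B ∧
      ∀ l, X l ∈ detIdeal (augment A B) k := by
  let c' : Fin (k + 1) → Fin (m + 1) := Fin.cons (Fin.last m) (fun j => (c j).castSucc)
  let Y : Fin k → R := fun j =>
    - ((-1) ^ (j.succ : ℕ) * ((augment A B).submatrix r (c' ∘ j.succ.succAbove)).det)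
  have hY : ∀ j, Y j ∈ detIdeal (augment A B) k := fun j =>
    neg_mem (Ideal.mul_mem_left _ _ (Ideal.subset_span ⟨r, _, rfl⟩))
  refine ⟨∑ j, Pi.single (c j) (Y j), ?_, ?_⟩
  · funext i
    have hz : ((augment A B).submatrix (Fin.cons i r : Fin (k + 1) → Fin n) c').det = 0 := by
      have : ((augment A B).submatrix (Fin.cons i r : Fin (k + 1) → Fin n) c').det ∈
        detIdeal (augment A B) (k + 1) := Ideal.subset_span ⟨_, _, rfl⟩
      rwa [h0] at this
    rw [Matrix.det_succ_row_zero, Fin.sum_univ_succ] at hz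
    have hm : ((augment A B).submatrix r (fun j => (c j).castSucc)) = A.submatrix r c := by
      ext a b
      simp [augment_castSucc]
    have e0 : (((augment A B).submatrix (Fin.cons i r : Fin (k + 1) → Fin n) c').submatrix
        Fin.succ (Fin.succAbove 0)) = A.submatrix r c := by
      rw [← hm]
      ext a b
      simp [c']
    have e1 : ∀ j : Fin k,
        (((augment A B).submatrix (Fin.cons i r : Fin (k + 1) → Fin n) c').submatrix
        Fin.succ (Fin.succAbove j.succ))
          = (augment A B).submatrix r (c' ∘ j.succ.succAbove) := by
      intro j
      ext a b
      simp
    rw [e0] at hz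
    simp only [e1] at hz
    have a0 : (augment A B).submatrix (Fin.cons i r : Fin (k + 1) → Fin n) c' 0 0 = B i := by
      simp [c', augment_last]
    have a1 : ∀ j : Fin k,
        (augment A B).submatrix (Fin.cons i r : Fin (k + 1) → Fin n) c' 0 j.succ
          = A i (c j) := by
      intro j
      simp [c', augment_castSucc]
    rw [a0] at hz
    simp only [a1] at hz
    have hl : A.mulVec (∑ j, Pi.single (c j) (Y j)) i = ∑ j, A i (c j) * Y j := by
      rw [Matrix.mulVec_sum, Finset.sum_apply]
      refine Finset.sum_congr rfl fun j _ => ?_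
      simp [Matrix.mulVec_single]
    rw [hl, Pi.smul_apply, smul_eq_mul]
    have hs : ∑ j, A i (c j) * Y j = - ∑ j : Fin k, (-1) ^ (j.succ : ℕ) * A i (c j) *
        ((augment A B).submatrix r (c' ∘ j.succ.succAbove)).det := by
      rw [← Finset.sum_neg_distrib]
      refine Finset.sum_congr rfl fun j _ => ?_
      simp only [Y]
      ring
    rw [hs]
    simp only [Fin.val_zero, pow_zero, one_mul] at hz
    linear_combination -hz
  · intro l
    rw [Finset.sum_apply]
    refine Ideal.sum_mem _ fun j _ => ?_
    by_cases h : l = c j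
    · subst h
      simpa using hY j
    · simp [h]

/-- Over a Prüfer domain, the system `A·X = B` has a solution iff the determinantal
ideals of `[A | B]` coincide with those of `A`. -/
theorem stmt_3 {R : Type*} [CommRing R] [IsDomain R]
    (hpruf : ∀ I : Ideal R, I.FG → I ≠ ⊥ →
      ∃ (J : Ideal R) (c : R), J.FG ∧ c ≠ 0 ∧ I * J = Ideal.span {c})
    {n m : ℕ} (A : Matrix (Fin n) (Fin m) R) (B : Fin n → R) :
    (∃ X : Fin m → R, A.mulVec X = B) ↔
      ∀ k : ℕ, 1 ≤ k → detIdeal (augment A B) k = detIdeal A k := by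
  constructor
  · rintro ⟨X, rfl⟩ k _
    exact le_antisymm (detIdeal_augment_le A X k) (detIdeal_le_augment A _ k)
  · intro H
    have H' : ∀ k, detIdeal (augment A B) k = detIdeal A k := by
      intro k
      rcases Nat.eq_zero_or_pos k with rfl | hk
      · rw [detIdeal_zero, detIdeal_zero]
      · exact H k hk
    obtain ⟨k, hk, hk1⟩ : ∃ k, detIdeal A k ≠ ⊥ ∧ detIdeal A (k + 1) = ⊥ := by
      by_contra! hcon
      have : ∀ k, detIdeal A k ≠ ⊥ := by
        intro k
        induction k with
        | zero => rw [detIdeal_zero]; exact top_ne_bot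
        | succ k ih => exact hcon k ih
      exact this _ (detIdeal_big A)
    obtain ⟨J, c, -, hc, hIJ⟩ := hpruf _ (detIdeal_fg A k) hk
    have h1 : ∀ x ∈ detIdeal A k, ∃ X : Fin m → R, A.mulVec X = x • B ∧
        ∀ l, X l ∈ detIdeal A k := by
      intro x hx
      refine Submodule.span_induction (p := fun x _ => ∃ X : Fin m → R, A.mulVec X = x • B ∧
        ∀ l, X l ∈ detIdeal A k) ?_ ?_ ?_ ?_ hx
      · rintro x ⟨r, c, rfl⟩
        rw [← H' k]
        exact cramer_minor A B ((H' _).trans hk1) r c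
      · exact ⟨0, by simp, by simp⟩
      · rintro x y _ _ ⟨X, hX, hX'⟩ ⟨Y, hY, hY'⟩
        exact ⟨X + Y, by rw [Matrix.mulVec_add, hX, hY, add_smul],
          fun l => add_mem (hX' l) (hY' l)⟩
      · rintro a x _ ⟨X, hX, hX'⟩
        exact ⟨a • X, by rw [Matrix.mulVec_smul, hX, smul_smul, smul_eq_mul],
          fun l => Ideal.mul_mem_left _ _ (hX' l)⟩
    have h2 : ∀ x ∈ detIdeal A k * J, ∃ X : Fin m → R, A.mulVec X = x • B ∧
        ∀ l, X l ∈ detIdeal A k * J := by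
      intro x hx
      refine Submodule.mul_induction_on hx ?_ ?_
      · intro x hx y hy
        obtain ⟨X, hX, hX'⟩ := h1 x hx
        refine ⟨y • X, by rw [Matrix.mulVec_smul, hX, smul_smul, mul_comm], fun l => ?_⟩
        rw [Pi.smul_apply, smul_eq_mul, mul_comm y]
        exact Ideal.mul_mem_mul (hX' l) hy
      · rintro x y ⟨X, hX, hX'⟩ ⟨Y, hY, hY'⟩
        exact ⟨X + Y, by rw [Matrix.mulVec_add, hX, hY, add_smul],
          fun l => add_mem (hX' l) (hY' l)⟩
    obtain ⟨X, hX, hX'⟩ := h2 c (by rw [hIJ]; exact Ideal.mem_span_singleton_self c)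
    rw [hIJ] at hX'
    choose Z hZ using fun l => Ideal.mem_span_singleton.1 (hX' l)
    have hXZ : X = c • Z := funext hZ
    refine ⟨Z, ?_⟩
    rw [hXZ, Matrix.mulVec_smul] at hX
    funext i
    exact mul_left_cancel₀ hc (congrFun hX i)
end

section
/- Let R be a Prüfer domain and let φ : E → H be an R-linear map between finitely generated projective R-modules. Then the saturation of the image of φ, namely the submodule S = {x ∈ H | ∃ d ∈ R, d ≠ 0 and d·x ∈ range φ}, is a direct summand of H: there exists a submodule N of H with S ⊓ N = ⊥ and S ⊔ N = H. -/
def satSub {R M : Type*} [CommRing R] [IsDomain R] [AddCommGroup M] [Module R M]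
    (N : Submodule R M) : Submodule R M where
  carrier := {x : M | ∃ d : R, d ≠ 0 ∧ d • x ∈ N}
  zero_mem' := ⟨1, one_ne_zero, by simp⟩
  add_mem' := by
    rintro a b ⟨d, hd, h⟩ ⟨e, he, h'⟩
    refine ⟨d * e, mul_ne_zero hd he, ?_⟩
    rw [smul_add]
    refine N.add_mem ?_ ?_
    · rw [mul_comm, mul_smul]; exact N.smul_mem _ h
    · rw [mul_smul]; exact N.smul_mem _ h'
  smul_mem' := by
    rintro c a ⟨d, hd, h⟩
    refine ⟨d, hd, ?_⟩
    rw [smul_comm]; exact N.smul_mem _ h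

theorem satSub_quot {R M : Type*} [CommRing R] [IsDomain R] [AddCommGroup M] [Module R M]
    (N : Submodule R M) (r : R) (x : M ⧸ satSub N) (h : r • x = 0) : r = 0 ∨ x = 0 := by
  by_cases hr : r = 0
  · exact Or.inl hr
  right
  obtain ⟨m, rfl⟩ := (satSub N).mkQ_surjective x
  rw [← map_smul] at h
  simp only [Submodule.mkQ_apply, Submodule.Quotient.mk_eq_zero] at h ⊢
  obtain ⟨d, hd, h⟩ := h
  exact ⟨d * r, mul_ne_zero hd hr, by rwa [mul_smul]⟩

theorem proj_split {R M : Type*} [CommRing R] [AddCommGroup M] [Module R M]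
    (N : Submodule R M) [Module.Projective R (M ⧸ N)] :
    ∃ f : M →ₗ[R] N, ∀ x : N, f x = x := by
  obtain ⟨s, hs⟩ := N.mkQ.exists_rightInverse_of_surjective N.range_mkQ
  have hmem : ∀ x : M, ((LinearMap.id : M →ₗ[R] M) - s ∘ₗ N.mkQ) x ∈ N := by
    intro x
    have := LinearMap.congr_fun hs (N.mkQ x)
    rw [← Submodule.Quotient.mk_eq_zero, ← Submodule.mkQ_apply]
    simp only [LinearMap.sub_apply, map_sub, LinearMap.id_apply, LinearMap.comp_apply] at this ⊢
    rw [this, sub_self]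
  refine ⟨(LinearMap.id - s ∘ₗ N.mkQ).codRestrict N hmem, fun x => ?_⟩
  · ext
    have h0 : (Submodule.Quotient.mk (x : M) : M ⧸ N) = 0 :=
      (Submodule.Quotient.mk_eq_zero N).2 x.2
    simp [LinearMap.codRestrict_apply, h0]

theorem ideal_proj {R : Type*} [CommRing R] [IsDomain R]
    (hpruf : ∀ I : Ideal R, I.FG → I ≠ ⊥ →
      ∃ (J : Ideal R) (c : R), J.FG ∧ c ≠ 0 ∧ I * J = Ideal.span {c})
    (I : Ideal R) (hI : I.FG) : Module.Projective R I := by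
  by_cases h0 : I = ⊥
  · subst h0; infer_instance
  obtain ⟨J, c, -, hc, hIJ⟩ := hpruf I hI h0
  have key : ∀ r ∈ I * J, ∃ t : I →ₗ[R] (I →₀ R), ∀ x : I,
      c • Finsupp.linearCombination R (id : I → I) (t x) = r • x := by
    intro r hr
    refine Submodule.mul_induction_on hr ?_ ?_
    · intro a ha b hb
      have h1 : ∀ x : I, ∃ y : R, c * y = x * b := by
        intro x
        have : (x : R) * b ∈ Ideal.span {c} := hIJ ▸ Ideal.mul_mem_mul x.2 hb
        obtain ⟨y, hy⟩ := Ideal.mem_span_singleton'.1 this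
        exact ⟨y, by rw [mul_comm, hy]⟩
      choose g hg using h1
      let G : I →ₗ[R] R :=
        { toFun := g
          map_add' := fun x y => mul_left_cancel₀ hc (by
            rw [mul_add, hg, hg, hg]; push_cast; ring)
          map_smul' := fun k x => mul_left_cancel₀ hc (by
            rw [hg]; simp only [RingHom.id_apply, smul_eq_mul, Submodule.coe_smul]
            rw [mul_left_comm, hg]; ring) }
      refine ⟨Finsupp.lsingle ⟨a, ha⟩ ∘ₗ G, fun x => ?_⟩
      ext
      have := hg x
      simp only [LinearMap.comp_apply, Finsupp.lsingle_apply, Finsupp.linearCombination_single,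
        id, Submodule.coe_smul, smul_eq_mul]
      change c * (g x * a) = a * b * x
      linear_combination a * this
    · rintro a b ⟨t, ht⟩ ⟨u, hu⟩
      exact ⟨t + u, fun x => by rw [LinearMap.add_apply, map_add, smul_add, ht, hu, add_smul]⟩
  obtain ⟨t, ht⟩ := key c (hIJ ▸ Ideal.mem_span_singleton_self c)
  refine Module.Projective.of_split t (Finsupp.linearCombination R (id : I → I)) ?_
  ext x
  have := congrArg Subtype.val (ht x)
  simp only [Submodule.coe_smul, smul_eq_mul] at this
  exact mul_left_cancel₀ hc this

theorem rank_one_proj {R : Type*} [CommRing R] [IsDomain R]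
    (hpruf : ∀ I : Ideal R, I.FG → I ≠ ⊥ →
      ∃ (J : Ideal R) (c : R), J.FG ∧ c ≠ 0 ∧ I * J = Ideal.span {c})
    {M : Type*} [AddCommGroup M] [Module R M] [Module.Finite R M]
    (htf : ∀ (r : R) (x : M), r • x = 0 → r = 0 ∨ x = 0)
    (x : M) (hx : ∀ m : M, ∃ d : R, d ≠ 0 ∧ d • m ∈ Submodule.span R {x}) :
    Module.Projective R M := by
  by_cases h0 : x = 0
  · have : Subsingleton M := by
      refine subsingleton_of_forall_eq 0 fun m => ?_
      obtain ⟨d, hd, h⟩ := hx m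
      rw [h0] at h
      exact (htf d m (by simpa using h)).resolve_left hd
    infer_instance
  have key : ∃ d : R, d ≠ 0 ∧ ∀ m ∈ (⊤ : Submodule R M), d • m ∈ Submodule.span R {x} := by
    refine Submodule.fg_induction
      (motive := fun N _ => ∃ d : R, d ≠ 0 ∧ ∀ m ∈ N, d • m ∈ Submodule.span R {x})
      ?_ ?_ ⊤ Module.Finite.fg_top
    · intro y
      obtain ⟨d, hd, h⟩ := hx y
      refine ⟨d, hd, fun m hm => ?_⟩
      obtain ⟨k, rfl⟩ := Submodule.mem_span_singleton.1 hm
      rw [smul_comm]; exact Submodule.smul_mem _ _ h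
    · rintro N₁ N₂ _ _ ⟨d, hd, h⟩ ⟨e, he, h'⟩
      refine ⟨d * e, mul_ne_zero hd he, fun m hm => ?_⟩
      obtain ⟨a, ha, b, hb, rfl⟩ := Submodule.mem_sup.1 hm
      rw [smul_add]
      refine Submodule.add_mem _ ?_ ?_
      · rw [mul_comm, mul_smul]; exact Submodule.smul_mem _ _ (h a ha)
      · rw [mul_smul]; exact Submodule.smul_mem _ _ (h' b hb)
  obtain ⟨d, hd, h⟩ := key
  have h1 : ∀ m : M, ∃ r : R, r • x = d • m := fun m =>
    Submodule.mem_span_singleton.1 (h m trivial)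
  choose g hg using h1
  have canc : ∀ a b : R, a • x = b • x → a = b := fun a b hab =>
    sub_eq_zero.1 ((htf (a - b) x (by rw [sub_smul, hab, sub_self])).resolve_right h0)
  let G : M →ₗ[R] R :=
    { toFun := g
      map_add' := fun a b => canc _ _ (by rw [add_smul, hg, hg, hg, smul_add])
      map_smul' := fun k a => canc _ _ (by
        rw [hg, RingHom.id_apply, smul_assoc, hg, smul_comm]) }
  have hG : Function.Injective G := by
    rw [← LinearMap.ker_eq_bot, LinearMap.ker_eq_bot']
    intro m hm
    have h2 : g m = 0 := hm
    have := hg m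
    rw [h2, zero_smul] at this
    exact (htf d m this.symm).resolve_left hd
  have : Module.Projective R (LinearMap.range G) :=
    ideal_proj hpruf (LinearMap.range G) (by
      rw [LinearMap.range_eq_map]; exact Module.Finite.fg_top.map G)
  exact Module.Projective.of_equiv (LinearEquiv.ofInjective G hG).symm

theorem tf_proj {R : Type*} [CommRing R] [IsDomain R]
    (hpruf : ∀ I : Ideal R, I.FG → I ≠ ⊥ →
      ∃ (J : Ideal R) (c : R), J.FG ∧ c ≠ 0 ∧ I * J = Ideal.span {c}) (n : ℕ) :
    ∀ {M : Type*} [AddCommGroup M] [Module R M]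
    (_ : ∀ (r : R) (x : M), r • x = 0 → r = 0 ∨ x = 0)
    (v : Fin n → M) (_ : Submodule.span R (Set.range v) = ⊤),
    Module.Projective R M := by
  induction n with
  | zero =>
    intro M _ _ _ v hv
    have : Subsingleton M := by
      rw [Set.range_eq_empty, Submodule.span_empty] at hv
      exact (Submodule.subsingleton_iff R).1 (subsingleton_of_bot_eq_top hv)
    infer_instance
  | succ n ih =>
    intro M _ _ htf v hv
    have : Module.Finite R M := ⟨⟨(Set.finite_range v).toFinset, by simpa using hv⟩⟩
    let N := satSub (Submodule.span R {v 0})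
    have hv0 : v 0 ∈ N := ⟨1, one_ne_zero, by
      rw [one_smul]; exact Submodule.mem_span_singleton_self _⟩
    have hQ : Module.Projective R (M ⧸ N) := by
      refine ih (satSub_quot _) (fun i => N.mkQ (v i.succ)) ?_
      rw [eq_top_iff, ← N.range_mkQ, LinearMap.range_eq_map, ← hv, Submodule.map_span,
        Submodule.span_le]
      rintro _ ⟨_, ⟨i, rfl⟩, rfl⟩
      refine Fin.cases ?_ (fun j => ?_) i
      · have : N.mkQ (v 0) = 0 := by simpa using hv0
        rw [this]; exact Submodule.zero_mem _
      · exact Submodule.subset_span ⟨j, rfl⟩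
    obtain ⟨f, hf⟩ := proj_split N
    have : Module.Finite R N := Module.Finite.of_surjective f fun x => ⟨x, hf x⟩
    have hN : Module.Projective R N := by
      refine rank_one_proj hpruf (fun r x hr => ?_) ⟨v 0, hv0⟩ (fun m => ?_)
      · have := htf r x (by simpa using congrArg Subtype.val hr)
        simpa using this
      · obtain ⟨d, hd, h⟩ := m.2
        obtain ⟨k, hk⟩ := Submodule.mem_span_singleton.1 h
        exact ⟨d, hd, Submodule.mem_span_singleton.2 ⟨k, Subtype.ext hk⟩⟩
    have hc := LinearMap.isCompl_of_proj hf
    have : Module.Projective R (LinearMap.ker f) :=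
      Module.Projective.of_equiv (Submodule.quotientEquivOfIsCompl _ _ hc)
    exact Module.Projective.of_equiv (Submodule.prodEquivOfIsCompl _ _ hc)


/-- Over a Prüfer domain, the saturation of the image of a linear map between finitely
generated projective modules is a direct summand of the target. -/
theorem stmt_10 {R : Type*} [CommRing R] [IsDomain R]
    (hpruf : ∀ I : Ideal R, I.FG → I ≠ ⊥ →
      ∃ (J : Ideal R) (c : R), J.FG ∧ c ≠ 0 ∧ I * J = Ideal.span {c})
    {E H : Type*} [AddCommGroup E] [Module R E] [AddCommGroup H] [Module R H]
    [Module.Finite R E] [Module.Projective R E]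
    [Module.Finite R H] [Module.Projective R H]
    (φ : E →ₗ[R] H) :
    ∃ S N : Submodule R H,
      (↑S = {x : H | ∃ d : R, d ≠ 0 ∧ d • x ∈ LinearMap.range φ}) ∧
      S ⊓ N = ⊥ ∧ S ⊔ N = ⊤ := by
  obtain ⟨n, v, hv⟩ := Module.Finite.exists_fin (R := R) (M := H ⧸ satSub (LinearMap.range φ))
  have := tf_proj hpruf n (satSub_quot (LinearMap.range φ)) v hv
  obtain ⟨f, hf⟩ := proj_split (satSub (LinearMap.range φ))
  have hc := LinearMap.isCompl_of_proj hf
  exact ⟨satSub (LinearMap.range φ), LinearMap.ker f, rfl, hc.inf_eq_bot, hc.sup_eq_top⟩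
end

section
/- Let R be a commutative ring, n ∈ ℕ, and let a : Fin n → R satisfy a i ∣ a j whenever i ≤ j (the diagonal matrix Diag(a_1,…,a_n) is in Smith form). Let u : Fin n → Rˣ be units with ∏_i u_i = 1, and set a'_i = a_i·u_i. Then the diagonal matrices Diag(a_1,…,a_n) and Diag(a'_1,…,a'_n) are elementarily equivalent: there exist matrices L and C in M_n(R), each a finite product of transvection matrices (matrices of the form 1 + c·E_{ij} with i ≠ j), such that L · Diag(a) · C = Diag(a'). -/
open Matrix in
theorem wh_aux {R : Type*} [CommRing R] {n : ℕ} (i j : Fin n) (h : i ≠ j) (v w : R)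
    (hvw : v * w = 1) :
    transvection i j v * transvection j i (-w) * transvection i j v =
      1 - single i i 1 - single j j 1 + single i j v - single j i w := by
  have hwv : w * v = 1 := by rw [mul_comm, hvw]
  have e : ∀ (a b : Fin n) (c : R), single a b (-c) = - single a b c := by
    intro a b c; ext x y; simp [single_apply]; split_ifs <;> simp
  simp only [transvection, mul_add, add_mul, one_mul, mul_one, single_mul_single_same, e,
    neg_mul, mul_neg, hvw, hwv, single_mul_single_of_ne _ _ _ _ h,
    single_mul_single_of_ne _ _ _ _ h.symm, neg_zero, zero_mul, mul_zero]
  abel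

open Matrix in
theorem wh {R : Type*} [CommRing R] {n : ℕ} (i j : Fin n) (h : i ≠ j) (v : Rˣ) :
    transvection i j (v : R) * transvection j i (-((v⁻¹ : Rˣ) : R)) * transvection i j (v : R) *
     (transvection i j (-1) * transvection j i (-(-1)) * transvection i j (-1)) =
    diagonal (fun k => (((Pi.mulSingle i v * Pi.mulSingle j v⁻¹ : Fin n → Rˣ) k : Rˣ) : R)) := by
  have e : ∀ (a b : Fin n) (c : R), single a b (-c) = - single a b c := by
    intro a b c; ext x y; simp [single_apply]; split_ifs <;> simp
  have hd : diagonal (fun k => (((Pi.mulSingle i v * Pi.mulSingle j v⁻¹ : Fin n → Rˣ) k : Rˣ) : R))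
      = 1 - single i i 1 - single j j 1 + single i i (v : R) + single j j ((v⁻¹ : Rˣ) : R) := by
    ext x y
    simp only [diagonal_apply, Matrix.add_apply, Matrix.sub_apply, Matrix.one_apply, single_apply,
      Pi.mul_apply, Pi.mulSingle_apply]
    by_cases hxy : x = y
    · subst hxy
      by_cases h1 : x = i
      · subst h1; simp [h, h.symm]
      · by_cases h2 : x = j
        · subst h2; simp [h, h1]
        · simp [h1, h2, Ne.symm h1, Ne.symm h2]
    · have h1 : ¬ (i = x ∧ i = y) := fun q => hxy (q.1.symm.trans q.2)
      have h2 : ¬ (j = x ∧ j = y) := fun q => hxy (q.1.symm.trans q.2)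
      simp [hxy, h1, h2]
  rw [hd, wh_aux i j h _ _ (by simp), wh_aux i j h (-1) (-1) (by simp)]
  simp only [mul_add, add_mul, mul_sub, sub_mul, one_mul, mul_one, single_mul_single_same, e,
    neg_mul, mul_neg, single_mul_single_of_ne _ _ _ _ h,
    single_mul_single_of_ne _ _ _ _ h.symm, neg_zero, zero_mul, mul_zero]
  abel

theorem diag_mem {R : Type*} [CommRing R] {n : ℕ} (u : Fin n → Rˣ) (hu : (∏ i, u i) = 1) :
    Matrix.diagonal (fun k => (u k : R)) ∈ Submonoid.closure
      (Set.range (Matrix.TransvectionStruct.toMatrix : _ → Matrix (Fin n) (Fin n) R)) := by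
  let f : (Fin n → Rˣ) →* Matrix (Fin n) (Fin n) R :=
    { toFun := fun u => Matrix.diagonal (fun k => (u k : R))
      map_one' := by simp
      map_mul' := fun a b => by simp [Matrix.diagonal_mul_diagonal] }
  change f u ∈ _
  rcases isEmpty_or_nonempty (Fin n) with hn | ⟨⟨i0⟩⟩
  · rw [Subsingleton.elim u 1, map_one]; exact one_mem _
  have hu2 : u = ∏ i, ((Pi.mulSingle i (u i) : Fin n → Rˣ) * Pi.mulSingle i0 (u i)⁻¹) := by
    rw [Finset.prod_mul_distrib, Finset.univ_prod_mulSingle]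
    have : ∏ i, (Pi.mulSingle i0 (u i)⁻¹ : Fin n → Rˣ) = 1 := by
      have := map_prod (MonoidHom.mulSingle (fun _ : Fin n => Rˣ) i0) (fun i => (u i)⁻¹)
        Finset.univ
      simp only [MonoidHom.mulSingle_apply] at this
      rw [← this, Finset.prod_inv_distrib, hu]; simp
    rw [this, mul_one]
  rw [hu2, ← Submonoid.mem_comap]
  refine Submonoid.prod_mem _ fun i _ => ?_
  rw [Submonoid.mem_comap]
  by_cases h : i = i0
  · subst h
    rw [← Pi.mulSingle_mul, mul_inv_cancel, Pi.mulSingle_one, map_one]; exact one_mem _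
  · have key : ∀ (a b : Fin n) (c : R), a ≠ b → Matrix.transvection a b c ∈ Submonoid.closure
      (Set.range (Matrix.TransvectionStruct.toMatrix : _ → Matrix (Fin n) (Fin n) R)) :=
      fun a b c hab => Submonoid.subset_closure ⟨⟨a, b, hab, c⟩, rfl⟩
    change Matrix.diagonal _ ∈ _
    rw [← wh i i0 h (u i)]
    have h' := Ne.symm h
    exact mul_mem (mul_mem (mul_mem (key _ _ _ h) (key _ _ _ h')) (key _ _ _ h))
      (mul_mem (mul_mem (key _ _ _ h) (key _ _ _ h')) (key _ _ _ h))

/-- A diagonal matrix in Smith form is elementarily equivalent to the diagonal matrix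
obtained by multiplying the entries by units of product `1`. -/
theorem stmt_15 {R : Type*} [CommRing R] {n : ℕ}
    (a : Fin n → R) (ha : ∀ i j : Fin n, i ≤ j → a i ∣ a j)
    (u : Fin n → Rˣ) (hu : (∏ i, u i) = 1) :
    ∃ (L C : Matrix (Fin n) (Fin n) R),
      (∃ ls : List (Matrix.TransvectionStruct (Fin n) R),
        L = (ls.map Matrix.TransvectionStruct.toMatrix).prod) ∧
      (∃ cs : List (Matrix.TransvectionStruct (Fin n) R),
        C = (cs.map Matrix.TransvectionStruct.toMatrix).prod) ∧
      L * Matrix.diagonal a * C = Matrix.diagonal (fun i => a i * (u i : R)) := by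
  obtain ⟨l, hl, hl2⟩ := Submonoid.exists_list_of_mem_closure (diag_mem u hu)
  obtain ⟨cs, rfl⟩ : ∃ cs : List (Matrix.TransvectionStruct (Fin n) R),
      cs.map Matrix.TransvectionStruct.toMatrix = l := by
    have : l ∈ Set.range (List.map
      (Matrix.TransvectionStruct.toMatrix : _ → Matrix (Fin n) (Fin n) R)) := by
      rw [Set.range_list_map]; exact hl
    exact this
  refine ⟨1, _, ⟨[], by simp⟩, ⟨cs, rfl⟩, ?_⟩
  rw [hl2, one_mul, Matrix.diagonal_mul_diagonal]
end

section
/- Let R be a Prüfer domain of Krull dimension at most 1. Every finitely presented torsion R-module M (i.e., every element of M is annihilated by some nonzero element of R) is isomorphic to a direct sum ⊕_{i=1}^n R/a_i, where a_1 ⊇ a_2 ⊇ ⋯ ⊇ a_n is a decreasing chain of nonzero finitely generated (hence invertible) ideals of R. -/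
/-- Idempotent comparability: up to an idempotent splitting, divisibility is total. -/
def IdemChain (A : Type*) [CommRing A] : Prop :=
  ∀ a b : A, ∃ e : A, e * e = e ∧ b ∣ e * a ∧ a ∣ (1 - e) * b

/-- Gluing two linear automorphisms along an idempotent. -/
theorem glue_equiv {A F : Type*} [CommRing A] [AddCommGroup F] [Module A F]
    (e : A) (he : e * e = e) (s t : F ≃ₗ[A] F) :
    ∃ u : F ≃ₗ[A] F, ∀ x, u x = e • s x + (1 - e) • t x := by
  have h1 : e * (1 - e) = 0 := by linear_combination -he
  have h2 : (1 - e) * e = 0 := by linear_combination -he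
  have h3 : (1 - e) * (1 - e) = 1 - e := by linear_combination he
  refine ⟨LinearEquiv.ofLinearMap (e • s.toLinearMap + (1 - e) • t.toLinearMap)
    (e • s.symm.toLinearMap + (1 - e) • t.symm.toLinearMap) ?_ ?_, ?_⟩
  · ext x
    simp [smul_smul, h1, h2, h3, he, ← add_smul]
  · ext x
    simp [smul_smul, h1, h2, h3, he, ← add_smul]
  · intro x
    simp

theorem pivot_aux {A : Type*} [CommRing A] (hA : IdemChain A) {n : ℕ}
    (K : Submodule A (Fin (n + 1) → A)) (L : List ((Fin (n + 1) → A) × Fin (n + 1)))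
    (hL : ∀ p ∈ L, p.1 ∈ K) :
    ∃ (s : (Fin (n + 1) → A) ≃ₗ[A] (Fin (n + 1) → A)) (k : Fin (n + 1) → A), k ∈ K ∧
      ∀ p ∈ L, s k 0 ∣ p.1 p.2 := by
  induction L with
  | nil => exact ⟨LinearEquiv.refl _ _, 0, K.zero_mem, by simp⟩
  | cons p L ih =>
    obtain ⟨s, k, hk, hs⟩ := ih (fun q hq => hL q (List.mem_cons_of_mem _ hq))
    obtain ⟨y, j⟩ := p
    have hy : y ∈ K := hL (y, j) List.mem_cons_self
    obtain ⟨e, he, ⟨c, hc⟩, ⟨c', hc'⟩⟩ := hA (s k 0) (y j)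
    obtain ⟨u, hu⟩ := glue_equiv e he
      (LinearEquiv.funCongrLeft A A (Equiv.swap 0 j)) s
    have hval : u (e • y + (1 - e) • k) 0 = e * y j + (1 - e) * s k 0 := by
      rw [hu]
      simp only [map_add, map_smul, Pi.add_apply, Pi.smul_apply, smul_eq_mul,
        LinearEquiv.funCongrLeft_apply, LinearMap.funLeft_apply, Equiv.swap_apply_left]
      linear_combination (y j - k j - s y 0 + s k 0) * he
    have hg1 : (e * y j + (1 - e) * s k 0) ∣ y j :=
      ⟨e + (1 - e) * c', by
        linear_combination (1 - e) * hc' + (-2 * y j + y j * c' + s k 0 - s k 0 * c') * he⟩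
    have hg2 : (e * y j + (1 - e) * s k 0) ∣ s k 0 :=
      ⟨e * c + (1 - e), by
        linear_combination e * hc + (-2 * s k 0 - y j * c + y j + s k 0 * c) * he⟩
    refine ⟨u, _, K.add_mem (K.smul_mem e hy) (K.smul_mem (1 - e) hk), ?_⟩
    intro q hq
    rw [hval]
    rcases List.mem_cons.1 hq with rfl | hq
    · exact hg1
    · exact hg2.trans (hs q hq)

theorem pivot {A : Type*} [CommRing A] (hA : IdemChain A) {n : ℕ}
    (K : Submodule A (Fin (n + 1) → A)) (hK : K.FG) :
    ∃ (s : (Fin (n + 1) → A) ≃ₗ[A] (Fin (n + 1) → A)) (k : Fin (n + 1) → A), k ∈ K ∧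
      ∀ y ∈ K, ∀ j, s k 0 ∣ y j := by
  obtain ⟨S, hS⟩ := hK
  obtain ⟨s, k, hk, h⟩ := pivot_aux hA K (S ×ˢ (Finset.univ : Finset (Fin (n + 1)))).toList (by
    intro p hp
    simp only [Finset.mem_toList, Finset.mem_product, Finset.mem_univ, and_true] at hp
    rw [← hS]
    exact Submodule.subset_span hp)
  refine ⟨s, k, hk, ?_⟩
  intro y hy
  rw [← hS] at hy
  induction hy using Submodule.span_induction with
  | mem x hx =>
    intro j
    exact h (x, j) (by simpa using hx)
  | zero => simp
  | add x y _ _ hx hy => intro j; exact dvd_add (hx j) (hy j)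
  | smul a x _ hx => intro j; exact (hx j).mul_left a

theorem dvd_map_coord {A : Type*} [CommRing A] {n m : ℕ} (f : (Fin n → A) →ₗ[A] (Fin m → A))
    (g : A) (x : Fin n → A) (hx : ∀ j, g ∣ x j) (i : Fin m) : g ∣ f x i := by
  choose c hc using hx
  have : x = g • c := by ext j; simp [hc]
  rw [this, map_smul]
  exact ⟨f c i, rfl⟩

theorem smith {A : Type*} [CommRing A] (hA : IdemChain A) (n : ℕ) :
    ∀ K : Submodule A (Fin n → A), K.FG →
    ∃ (s : (Fin n → A) ≃ₗ[A] (Fin n → A)) (d : Fin n → A),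
      (∀ i j, i ≤ j → d i ∣ d j) ∧ ∀ x, x ∈ K ↔ ∀ i, d i ∣ s x i := by
  induction n with
  | zero =>
    intro K _
    refine ⟨LinearEquiv.refl _ _, 0, fun i => i.elim0, fun x => ?_⟩
    rw [Subsingleton.elim x 0]
    exact ⟨fun _ i => i.elim0, fun _ => K.zero_mem⟩
  | succ n ih =>
    intro K hK
    obtain ⟨s, k, hk, hdiv⟩ := pivot hA K hK
    set g := s k 0 with hg
    have hdiv1 : ∀ y ∈ K, ∀ j, g ∣ s y j := fun y hy j =>
      dvd_map_coord s.toLinearMap g y (hdiv y hy) j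
    choose c hc using hdiv1 k hk
    -- the shear
    let T : (Fin (n + 1) → A) ≃ₗ[A] A × (Fin n → A) :=
      s.trans (Fin.consLinearEquiv A (fun _ : Fin (n + 1) => A)).symm
    have hT1 : ∀ x, (T x).1 = s x 0 := fun x => rfl
    have hT2 : ∀ x i, (T x).2 i = s x i.succ := fun x i => rfl
    let sh : (A × (Fin n → A)) ≃ₗ[A] (A × (Fin n → A)) :=
      LinearEquiv.ofLinearMap
        (LinearMap.prod (LinearMap.fst A A _)
          (LinearMap.snd A A _ - (LinearMap.fst A A _).smulRight (fun i : Fin n => c i.succ)))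
        (LinearMap.prod (LinearMap.fst A A _)
          (LinearMap.snd A A _ + (LinearMap.fst A A _).smulRight (fun i : Fin n => c i.succ)))
        (by ext <;> simp) (by ext <;> simp)
    let U := T.trans sh
    have hU1 : ∀ x, (U x).1 = s x 0 := fun x => rfl
    have hU2 : ∀ x i, (U x).2 i = s x i.succ - s x 0 * c i.succ := fun x i => rfl
    have hUk2 : (U k).2 = 0 := by
      ext i
      rw [hU2, hc, ← hg]
      simp
    let K' : Submodule A (Fin n → A) := K.map ((LinearMap.snd A A _) ∘ₗ U.toLinearMap)
    obtain ⟨s', d', hd', hK'⟩ := ih K' (hK.map _)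
    have hmem : ∀ x, x ∈ K ↔ g ∣ s x 0 ∧ (U x).2 ∈ K' := by
      intro x
      constructor
      · intro hx
        exact ⟨hdiv1 x hx 0, ⟨x, hx, rfl⟩⟩
      · rintro ⟨⟨a, ha⟩, ⟨y, hy, hxy⟩⟩
        obtain ⟨b, hb⟩ := hdiv1 y hy 0
        have hxy' : (U y).2 = (U x).2 := hxy
        have : x = y + (a - b) • k := by
          apply U.injective
          rw [map_add, map_smul]
          refine Prod.ext ?_ ?_
          · simp only [Prod.fst_add, Prod.smul_fst, hU1, smul_eq_mul, ← hg]
            rw [ha, hb]; ring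
          · simp only [Prod.snd_add, Prod.smul_snd, hUk2, smul_zero, add_zero, hxy']
        rw [this]
        exact K.add_mem hy (K.smul_mem _ hk)
    have hgd : ∀ i, g ∣ d' i := by
      intro i
      have h1 : s'.symm (Pi.single i (d' i)) ∈ K' := by
        rw [hK']
        intro j
        rw [LinearEquiv.apply_symm_apply]
        by_cases hj : j = i
        · subst hj; simp
        · simp [hj]
      have h2 : ∀ j, g ∣ s'.symm (Pi.single i (d' i)) j := by
        obtain ⟨y, hy, hyy⟩ := h1
        rw [← hyy]
        intro j
        change g ∣ (U y).2 j
        rw [hU2]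
        exact dvd_sub (hdiv1 y hy _) ((hdiv1 y hy 0).mul_right _)
      have h3 := dvd_map_coord s'.toLinearMap g _ h2 i
      simpa using h3
    refine ⟨U.trans ((LinearEquiv.prodCongr (LinearEquiv.refl A A) s').trans
      (Fin.consLinearEquiv A (fun _ : Fin (n + 1) => A))), Fin.cons g d', ?_, ?_⟩
    · intro i j hij
      induction i using Fin.cases with
      | zero =>
        induction j using Fin.cases with
        | zero => simp
        | succ j => simpa using hgd j
      | succ i =>
        induction j using Fin.cases with
        | zero => simp at hij
        | succ j => simpa using hd' i j (by simpa using hij)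
    · intro x
      rw [hmem, hK', Fin.forall_fin_succ]
      rfl

theorem exists_pow_idem_aux {R : Type*} [CommRing R] [IsDomain R]
    (hdim : ∀ p q r : Ideal R, p.IsPrime → q.IsPrime → r.IsPrime → p < q → q < r → False)
    (d : R) (hd : d ≠ 0) (t : R) :
    ∃ (n : ℕ) (y : R), d ∣ t ^ n * (1 - t * y) := by
  let S : Submonoid R :=
    { carrier := {x | ∃ (n : ℕ) (y : R), x = t ^ n * (1 - t * y)}
      one_mem' := ⟨0, 0, by simp⟩
      mul_mem' := by
        rintro a b ⟨n, y, rfl⟩ ⟨m, z, rfl⟩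
        exact ⟨n + m, y + z - t * y * z, by ring⟩ }
  by_contra hcon
  push Not at hcon
  have hdisj : Disjoint ((Ideal.span {d} : Ideal R) : Set R) S := by
    rw [Set.disjoint_left]
    rintro x hx ⟨n, y, rfl⟩
    exact hcon n y (Ideal.mem_span_singleton.1 hx)
  obtain ⟨p, hp, hdp, hpS⟩ := Ideal.exists_le_prime_disjoint _ S hdisj
  have hdp' : d ∈ p := hdp (Ideal.mem_span_singleton_self d)
  have hmax : p.IsMaximal := by
    obtain ⟨m, hm, hpm⟩ := Ideal.exists_le_maximal p hp.ne_top
    rcases hpm.eq_or_lt with h | h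
    · exact h ▸ hm
    · exfalso
      refine hdim ⊥ p m Ideal.isPrime_bot hp hm.isPrime (bot_lt_iff_ne_bot.2 ?_) h
      rintro rfl
      exact hd (by simpa using hdp')
  rw [Set.disjoint_left] at hpS
  have htp : t ∉ p := fun h => hpS (a := t) h ⟨1, 0, by simp⟩
  obtain ⟨y, hy⟩ := hmax.exists_inv htp
  refine hpS (a := 1 - t * y) ?_ ⟨0, y, by simp⟩
  obtain ⟨i, hi, hyi⟩ := hy
  have : 1 - t * y = i := by linear_combination -hyi
  exact this ▸ hi

theorem exists_idem_split {A : Type*} [CommRing A] (t : A) (n : ℕ) (y : A)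
    (h : t ^ n * (1 - t * y) = 0) :
    ∃ e : A, e * e = e ∧ t ∣ e ∧ (1 - t) ∣ (1 - e) := by
  have h1 : t ^ (n + 1) = t ^ (n + 1) * (t * y) := by linear_combination t * h
  have h2 : ∀ k, t ^ (n + 1) = t ^ (n + 1) * (t * y) ^ k := by
    intro k
    induction k with
    | zero => simp
    | succ k ih => rw [pow_succ (t * y) k, ← mul_assoc, ← ih]; exact h1
  have h3 := h2 (n + 1)
  refine ⟨t ^ (n + 1) * y ^ (n + 1), ?_, ?_, ?_⟩
  · rw [mul_pow] at h3
    linear_combination -(y ^ (n + 1)) * h3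
  · exact Dvd.dvd.mul_right (dvd_pow_self t (by omega)) _
  · have : (1 - t ^ (n + 1) * y ^ (n + 1)) =
        (1 - t ^ (n + 1)) * (1 - t ^ (n + 1) * y ^ (n + 1)) := by
      rw [mul_pow] at h3
      linear_combination h3
    rw [this]
    exact (by simpa using sub_dvd_pow_sub_pow (1 : A) t (n + 1) : (1 - t) ∣ 1 - t ^ (n + 1)).mul_right _

theorem pruf_pair {R : Type*} [CommRing R] [IsDomain R]
    (hpruf : ∀ I : Ideal R, I.FG → I ≠ ⊥ →
      ∃ (J : Ideal R) (c : R), J.FG ∧ c ≠ 0 ∧ I * J = Ideal.span {c}) (a b : R) :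
    ∃ t : R, b ∣ t * a ∧ a ∣ (1 - t) * b := by
  by_cases h0 : a = 0
  · exact ⟨1, by simp [h0], by simp⟩
  have hne : (Ideal.span {a, b} : Ideal R) ≠ ⊥ := by
    intro h
    have : a ∈ (Ideal.span {a, b} : Ideal R) := Ideal.subset_span (by simp)
    rw [h] at this
    exact h0 (by simpa using this)
  obtain ⟨J, c, -, hc, hJ⟩ := hpruf (Ideal.span {a, b}) (Submodule.fg_span (Set.toFinite _)) hne
  have ha : a ∈ (Ideal.span {a, b} : Ideal R) := Ideal.subset_span (by simp)
  have hb : b ∈ (Ideal.span {a, b} : Ideal R) := Ideal.subset_span (by simp)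
  have hcd : ∀ x ∈ (Ideal.span {a, b} : Ideal R), ∀ q ∈ J, c ∣ x * q := by
    intro x hx q hq
    rw [← Ideal.mem_span_singleton, ← hJ]
    exact Ideal.mul_mem_mul hx hq
  have hcm : c ∈ (Ideal.span {a, b} : Ideal R) * J := hJ ▸ Ideal.mem_span_singleton_self c
  rw [Ideal.span_insert, Ideal.sup_mul, Submodule.mem_sup] at hcm
  obtain ⟨y, hy, z, hz, hyz⟩ := hcm
  obtain ⟨p, hp, rfl⟩ := Ideal.mem_span_singleton_mul.1 hy
  obtain ⟨q, hq, rfl⟩ := Ideal.mem_span_singleton_mul.1 hz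
  obtain ⟨t, ht⟩ := hcd b hb q hq
  obtain ⟨u, hu⟩ := hcd a ha q hq
  obtain ⟨v, hv⟩ := hcd b hb p hp
  refine ⟨t, ⟨u, ?_⟩, ⟨v, ?_⟩⟩
  · apply mul_left_cancel₀ hc
    linear_combination -a * ht + b * hu
  · apply mul_left_cancel₀ hc
    linear_combination -b * hyz + b * ht + a * hv

theorem idemChain_quot {R : Type*} [CommRing R] [IsDomain R]
    (hpruf : ∀ I : Ideal R, I.FG → I ≠ ⊥ →
      ∃ (J : Ideal R) (c : R), J.FG ∧ c ≠ 0 ∧ I * J = Ideal.span {c})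
    (hdim : ∀ p q r : Ideal R, p.IsPrime → q.IsPrime → r.IsPrime → p < q → q < r → False)
    (d : R) (hd : d ≠ 0) : IdemChain (R ⧸ Ideal.span {d}) := by
  intro a b
  obtain ⟨a, rfl⟩ := Ideal.Quotient.mk_surjective a
  obtain ⟨b, rfl⟩ := Ideal.Quotient.mk_surjective b
  set f := Ideal.Quotient.mk (Ideal.span {d})
  obtain ⟨t, h1, h2⟩ := pruf_pair hpruf a b
  obtain ⟨n, y, hy⟩ := exists_pow_idem_aux hdim d hd t
  obtain ⟨e, he, hte, hte'⟩ := exists_idem_split (f t) n (f y) (by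
    have : f (t ^ n * (1 - t * y)) = 0 :=
      Ideal.Quotient.eq_zero_iff_mem.2 (Ideal.mem_span_singleton.2 hy)
    simpa using this)
  refine ⟨e, he, ?_, ?_⟩
  · have := map_dvd f h1
    rw [map_mul] at this
    exact this.trans (mul_dvd_mul_right hte _)
  · have := map_dvd f h2
    rw [map_mul, map_sub, map_one] at this
    exact this.trans (mul_dvd_mul_right hte' _)

set_option maxHeartbeats 2000000 in
/-- Over a Prüfer domain of Krull dimension at most 1, every finitely presented torsion
module is isomorphic to a direct sum `⊕ᵢ R⧸aᵢ` with a decreasing chain of nonzero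
finitely generated ideals `a₁ ⊇ ⋯ ⊇ aₙ`. -/
theorem stmt_16 {R : Type*} [CommRing R] [IsDomain R]
    (hpruf : ∀ I : Ideal R, I.FG → I ≠ ⊥ →
      ∃ (J : Ideal R) (c : R), J.FG ∧ c ≠ 0 ∧ I * J = Ideal.span {c})
    (hdim : ∀ p q r : Ideal R, p.IsPrime → q.IsPrime → r.IsPrime → p < q → q < r → False)
    (M : Type*) [AddCommGroup M] [Module R M] [Module.FinitePresentation R M]
    (htors : ∀ x : M, ∃ d : R, d ≠ 0 ∧ d • x = 0) :
    ∃ (n : ℕ) (a : Fin n → Ideal R),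
      (∀ i j : Fin n, i ≤ j → a j ≤ a i) ∧
      (∀ i, (a i).FG ∧ a i ≠ ⊥) ∧
      Nonempty (M ≃ₗ[R] ((i : Fin n) → R ⧸ a i)) := by
  classical
  obtain ⟨n, K, eM, hK⟩ := Module.FinitePresentation.exists_fin R M
  -- a common annihilator
  obtain ⟨d, hd, hdK⟩ : ∃ d : R, d ≠ 0 ∧ ∀ x : Fin n → R, d • x ∈ K := by
    have h1 : ∀ i : Fin n, ∃ c : R, c ≠ 0 ∧ c • (Pi.single i 1 : Fin n → R) ∈ K := by
      intro i
      obtain ⟨c, hc, h⟩ := htors (eM.symm (K.mkQ (Pi.single i 1)))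
      refine ⟨c, hc, ?_⟩
      rw [← map_smul, ← map_smul, LinearEquiv.map_eq_zero_iff] at h
      exact (Submodule.Quotient.mk_eq_zero K).1 h
    choose c hc hcK using h1
    refine ⟨∏ i, c i, Finset.prod_ne_zero_iff.2 fun i _ => hc i, fun x => ?_⟩
    rw [pi_eq_sum_univ' x, Finset.smul_sum]
    refine K.sum_mem fun i _ => ?_
    obtain ⟨r, hr⟩ := Finset.dvd_prod_of_mem c (Finset.mem_univ i)
    rw [hr]
    have : (c i * r) • x i • (Pi.single i 1 : Fin n → R) =
        (r * x i) • (c i • (Pi.single i 1 : Fin n → R)) := by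
      ext j
      by_cases hj : j = i
      · subst hj; simp; ring
      · simp [hj]
    rw [this]
    exact K.smul_mem _ (hcK i)
  let A := R ⧸ Ideal.span {d}
  let f : R →+* A := Ideal.Quotient.mk (Ideal.span {d})
  have hf : Function.Surjective f := Ideal.Quotient.mk_surjective
  have hA : IdemChain A := idemChain_quot hpruf hdim d hd
  let P : (Fin n → R) →ₗ[R] (Fin n → A) :=
    LinearMap.compLeft (Ideal.Quotient.mkₐ R (Ideal.span {d})).toLinearMap (Fin n)
  have hP : ∀ x i, P x i = f (x i) := fun x i => rfl
  have hPs : Function.Surjective P := by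
    intro y
    choose x hx using fun i => hf (y i)
    exact ⟨x, funext hx⟩
  have hPk : ∀ x, P x = 0 → x ∈ K := by
    intro x hx
    have : ∀ i, ∃ c, x i = d * c := by
      intro i
      have h : f (x i) = 0 := congrFun hx i
      exact Ideal.mem_span_singleton.1 (Ideal.Quotient.eq_zero_iff_mem.1 h)
    choose c hc using this
    have : x = d • c := by ext i; simp [hc]
    rw [this]; exact hdK c
  have hPsm : ∀ (r : R) x, P (r • x) = f r • P x := by
    intro r x
    ext i
    simp [hP]
  obtain ⟨S, hS⟩ := hK
  let K' : Submodule A (Fin n → A) := Submodule.span A ((S.image P : Finset (Fin n → A)) : Set _)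
  have hK1 : ∀ x ∈ K, P x ∈ K' := by
    intro x hx
    rw [← hS] at hx
    induction hx using Submodule.span_induction with
    | mem x hx => exact Submodule.subset_span (by simpa using ⟨x, hx, rfl⟩)
    | zero => rw [map_zero]; exact K'.zero_mem
    | add x y _ _ hx hy => rw [map_add]; exact K'.add_mem hx hy
    | smul r x _ hx => rw [hPsm]; exact K'.smul_mem _ hx
  have hK2 : ∀ y ∈ K', ∃ x ∈ K, P x = y := by
    intro y hy
    induction hy using Submodule.span_induction with
    | mem y hy =>
      obtain ⟨x, hx, rfl⟩ := Finset.mem_image.1 (Finset.mem_coe.1 hy)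
      exact ⟨x, hS ▸ Submodule.subset_span hx, rfl⟩
    | zero => exact ⟨0, K.zero_mem, map_zero P⟩
    | add y z _ _ hy hz =>
      obtain ⟨x, hx, rfl⟩ := hy
      obtain ⟨w, hw, rfl⟩ := hz
      exact ⟨x + w, K.add_mem hx hw, map_add P _ _⟩
    | smul a y _ hy =>
      obtain ⟨x, hx, rfl⟩ := hy
      obtain ⟨r, rfl⟩ := hf a
      exact ⟨r • x, K.smul_mem _ hx, hPsm r x⟩
  have hK3 : ∀ x, P x ∈ K' ↔ x ∈ K := by
    intro x
    refine ⟨fun h => ?_, hK1 x⟩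
    obtain ⟨y, hy, hxy⟩ := hK2 _ h
    have : x = (x - y) + y := by abel
    rw [this]
    exact K.add_mem (hPk _ (by rw [map_sub, hxy, sub_self])) hy
  obtain ⟨s, g, hg, hs⟩ := smith hA n K' ⟨_, rfl⟩
  choose g' hg' using fun i => hf (g i)
  let ψ : (i : Fin n) → A →ₗ[R] (A ⧸ Ideal.span {g i}) := fun i =>
    (Submodule.mkQ (Ideal.span {g i})).restrictScalars R
  have hψ : ∀ i, Function.Surjective (ψ i) := fun i => Submodule.mkQ_surjective _
  have hψ0 : ∀ i x, ψ i x = 0 ↔ g i ∣ x := by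
    intro i x
    rw [← Ideal.mem_span_singleton]
    exact Submodule.Quotient.mk_eq_zero _
  let q : (i : Fin n) → R →ₗ[R] (A ⧸ Ideal.span {g i}) := fun i =>
    ψ i ∘ₗ (Ideal.Quotient.mkₐ R (Ideal.span {d})).toLinearMap
  have hq : ∀ i, Function.Surjective (q i) := fun i => (hψ i).comp hf
  let a : Fin n → Ideal R := fun i => LinearMap.ker (q i)
  have ha : ∀ i r, r ∈ a i ↔ g i ∣ f r := fun i r => hψ0 i (f r)
  have hda : ∀ i, d ∈ a i := by
    intro i
    rw [ha]
    have : f d = 0 := Ideal.Quotient.eq_zero_iff_mem.2 (Ideal.mem_span_singleton_self d)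
    rw [this]
    exact dvd_zero _
  let Φ : (Fin n → R) →ₗ[R] ((i : Fin n) → A ⧸ Ideal.span {g i}) :=
    LinearMap.pi (fun i => ψ i ∘ₗ LinearMap.proj i) ∘ₗ (s.toLinearMap.restrictScalars R) ∘ₗ P
  have hΦ : ∀ x i, Φ x i = ψ i (s (P x) i) := fun x i => rfl
  have hΦs : Function.Surjective Φ := by
    intro y
    choose z hz using fun i => hψ i (y i)
    obtain ⟨x, hx⟩ := hPs (s.symm z)
    refine ⟨x, funext fun i => ?_⟩
    rw [hΦ, hx, LinearEquiv.apply_symm_apply, hz]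
  have hΦk : K = LinearMap.ker Φ := by
    ext x
    rw [← hK3, hs, LinearMap.mem_ker, funext_iff]
    exact forall_congr' fun i => (hψ0 i _).symm
  refine ⟨n, a, ?_, ?_, ?_⟩
  · intro i j hij r hr
    rw [ha] at hr ⊢
    exact (hg i j hij).trans hr
  · intro i
    constructor
    · have : a i = Ideal.span {g' i, d} := by
        apply le_antisymm
        · intro r hr
          rw [ha] at hr
          obtain ⟨c, hc⟩ := hr
          obtain ⟨c, rfl⟩ := hf c
          rw [← hg', ← map_mul] at hc
          obtain ⟨w, hw⟩ := Ideal.mem_span_singleton.1 (Ideal.Quotient.eq.1 hc)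
          rw [Ideal.mem_span_pair]
          exact ⟨c, w, by linear_combination -hw⟩
        · rw [Ideal.span_le]
          rintro r (rfl | rfl)
          · exact (ha i _).2 (by rw [hg'])
          · exact hda i
      rw [this]
      exact Submodule.fg_span (Set.toFinite _)
    · intro h
      have := hda i
      rw [h] at this
      exact hd (by simpa using this)
  · exact ⟨eM.trans ((Submodule.quotEquivOfEq _ _ hΦk).trans
      ((Φ.quotKerEquivOfSurjective hΦs).trans
        (LinearEquiv.piCongrRight fun i => ((q i).quotKerEquivOfSurjective (hq i)).symm)))⟩
end

section
/- Let R be a Prüfer domain of Krull dimension at most 1 and let M ∈ M_n(R) be a square matrix with d = det M ≠ 0. Then there exists a decreasing chain of ideals a_1 ⊇ a_2 ⊇ ⋯ ⊇ a_n of R such that d ∈ a_i for every i, ∏_{i=1}^n a_i = ⟨d⟩, and the cokernel R^n ⧸ range(M·(−)) (quotient of R^n by the image of the linear map X ↦ M·X) is isomorphic to ⊕_{i=1}^n R/a_i. -/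
namespace Stmt18

/-- Arithmetical property of Prüfer domains. -/
theorem arith {R : Type*} [CommRing R] [IsDomain R]
    (hpruf : ∀ I : Ideal R, I.FG → I ≠ ⊥ →
      ∃ (J : Ideal R) (c : R), J.FG ∧ c ≠ 0 ∧ I * J = Ideal.span {c}) (a b : R) :
    ∃ s : R, b ∣ s * a ∧ a ∣ (1 - s) * b := by
  by_cases hab : Ideal.span {a, b} = (⊥ : Ideal R)
  · have ha : a = 0 := by
      have : a ∈ Ideal.span {a, b} := Ideal.subset_span (by simp)
      rw [hab] at this; simpa using this
    have hb : b = 0 := by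
      have : b ∈ Ideal.span {a, b} := Ideal.subset_span (by simp)
      rw [hab] at this; simpa using this
    exact ⟨0, by simp [ha, hb]⟩
  obtain ⟨J, c, -, hc, hIJ⟩ := hpruf (Ideal.span {a, b}) 
    (Submodule.fg_span (by simp)) hab
  have key : ∀ z ∈ Ideal.span {a, b}, ∀ x ∈ J, c ∣ z * x := by
    intro z hz x hx
    rw [← Ideal.mem_span_singleton, ← hIJ]
    exact Ideal.mul_mem_mul hz hx
  have haI : a ∈ Ideal.span {a, b} := Ideal.subset_span (by simp)
  have hbI : b ∈ Ideal.span {a, b} := Ideal.subset_span (by simp)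
  have hcmem : c ∈ Ideal.span {a} * J ⊔ Ideal.span {b} * J := by
    rw [← Ideal.sup_mul, ← Ideal.span_union]
    have : ({a} ∪ {b} : Set R) = {a, b} := by ext; simp [or_comm]
    rw [this, hIJ]; exact Ideal.mem_span_singleton_self c
  obtain ⟨p, hp, q, hq, hpq⟩ := Submodule.mem_sup.1 hcmem
  obtain ⟨x, hx, rfl⟩ := Ideal.mem_span_singleton_mul.1 hp
  obtain ⟨y, hy, rfl⟩ := Ideal.mem_span_singleton_mul.1 hq
  obtain ⟨s, hs⟩ := key a haI x hx
  obtain ⟨u, hu⟩ := key a haI y hy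
  obtain ⟨t, ht⟩ := key b hbI x hx
  refine ⟨1 - s, ⟨u, ?_⟩, ⟨t, ?_⟩⟩
  · apply mul_left_cancel₀ hc
    linear_combination b * hu - a * hs + a * hs - a * hpq + a * hs
  · apply mul_left_cancel₀ hc
    linear_combination a * ht - b * hs

theorem zdim {R : Type*} [CommRing R] [IsDomain R]
    (hdim : ∀ p q r : Ideal R, p.IsPrime → q.IsPrime → r.IsPrime → p < q → q < r → False)
    (d : R) (hd : d ≠ 0) (x : R) : ∃ (k : ℕ) (y : R), d ∣ x ^ k * (1 - x * y) := by
  by_contra! hcon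
  let S : Submonoid R :=
    { carrier := {z | ∃ (k : ℕ) (y : R), z = x ^ k * (1 - x * y)}
      one_mem' := ⟨0, 0, by simp⟩
      mul_mem' := by
        rintro _ _ ⟨k, y, rfl⟩ ⟨l, z, rfl⟩
        exact ⟨k + l, y + z - x * y * z, by ring⟩ }
  have hdis : Disjoint (Ideal.span {d} : Set R) (S : Set R) := by
    rw [Set.disjoint_left]
    rintro z hz ⟨k, y, rfl⟩
    exact hcon k y (Ideal.mem_span_singleton.1 hz)
  obtain ⟨p, hp, hle, hpd⟩ := Ideal.exists_le_prime_disjoint _ S hdis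
  rw [Set.disjoint_left] at hpd
  have hxp : x ∉ p := fun h => hpd h ⟨1, 0, by simp⟩
  have hne : p ⊔ Ideal.span {x} ≠ ⊤ := by
    intro h
    have h1 : (1 : R) ∈ p ⊔ Ideal.span {x} := by rw [h]; trivial
    obtain ⟨u, hu, v, hv, huv⟩ := Submodule.mem_sup.1 h1
    obtain ⟨y, rfl⟩ := Ideal.mem_span_singleton.1 hv
    refine hpd hu ⟨0, y, ?_⟩
    linear_combination huv
  obtain ⟨m, hm, hpm⟩ := Ideal.exists_le_maximal _ hne
  have hdp : d ∈ p := hle (Ideal.mem_span_singleton_self d)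
  refine hdim ⊥ p m Ideal.isPrime_bot hp hm.isPrime ?_ ?_
  · rw [bot_lt_iff_ne_bot]
    rintro rfl
    exact hd (by simpa using hdp)
  · refine lt_of_le_of_ne (le_sup_left.trans hpm) ?_
    rintro rfl
    exact hxp (hpm (Ideal.mem_sup_right (Ideal.mem_span_singleton_self x)))

/-- divisibility is total up to an idempotent -/
def Tot (A : Type*) [CommRing A] : Prop :=
  ∀ a b : A, ∃ e : A, e * e = e ∧ b ∣ e * a ∧ a ∣ (1 - e) * b

theorem tot_quot {R : Type*} [CommRing R] [IsDomain R]
    (hpruf : ∀ I : Ideal R, I.FG → I ≠ ⊥ →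
      ∃ (J : Ideal R) (c : R), J.FG ∧ c ≠ 0 ∧ I * J = Ideal.span {c})
    (hdim : ∀ p q r : Ideal R, p.IsPrime → q.IsPrime → r.IsPrime → p < q → q < r → False)
    (d : R) (hd : d ≠ 0) : Tot (R ⧸ Ideal.span {d}) := by
  intro a b
  obtain ⟨a, rfl⟩ := Ideal.Quotient.mk_surjective a
  obtain ⟨b, rfl⟩ := Ideal.Quotient.mk_surjective b
  obtain ⟨s, hs1, hs2⟩ := arith hpruf a b
  obtain ⟨k, y, hk⟩ := zdim hdim d hd s
  set f := Ideal.Quotient.mk (Ideal.span {d}) with hf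
  have hk0 : f (s ^ k * (1 - s * y)) = 0 := by
    rw [hf, Ideal.Quotient.eq_zero_iff_mem, Ideal.mem_span_singleton]; exact hk
  have h1 : f b ∣ f s * f a := by rw [← map_mul]; exact map_dvd f hs1
  have h2 : f a ∣ (1 - f s) * f b := by
    rw [← map_one f, ← map_sub, ← map_mul]; exact map_dvd f hs2
  simp only [map_mul, map_pow, map_sub, map_one] at hk0
  generalize f a = a at *
  generalize f b = b at *
  generalize f s = s at *
  generalize f y = y at *
  -- make the exponent positive
  have hk1 : s ^ (k + 1) * (1 - s * y) = 0 := by rw [pow_succ]; linear_combination s * hk0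
  have hdv : (1 - s * y) ∣ 1 - (s * y) ^ (k + 1) := by
    simpa using sub_dvd_pow_sub_pow (1 : _) (s * y) (k + 1)
  have hz : s ^ (k + 1) * (1 - (s * y) ^ (k + 1)) = 0 := by
    obtain ⟨w, hw⟩ := hdv
    rw [hw, ← mul_assoc, hk1, zero_mul]
  have hds : (1 - s) ∣ 1 - s ^ (k + 1) := by
    simpa using sub_dvd_pow_sub_pow (1 : _) s (k + 1)
  refine ⟨(s * y) ^ (k + 1), ?_, ?_, ?_⟩
  · rw [mul_pow] at hz ⊢
    linear_combination (-y ^ (k + 1)) * hz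
  · have : (s * y) ^ (k + 1) * a = (s * a) * (y * (s * y) ^ k) := by ring
    rw [this]; exact h1.mul_right _
  · obtain ⟨w, hw⟩ := hds
    have : (1 - (s * y) ^ (k + 1)) * b = ((1 - s) * b) * (w * (1 - (s * y) ^ (k + 1))) := by
      linear_combination b * hz + b * (1 - (s * y) ^ (k + 1)) * hw
    rw [this]; exact h2.mul_right _

theorem glue_unit {A B : Type*} [CommRing A] [Ring B] [Algebra A B] (e : A) (he : e * e = e)
    {P Q : B} (hP : IsUnit P) (hQ : IsUnit Q) : IsUnit ((1 - e) • P + e • Q) := by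
  obtain ⟨P, rfl⟩ := hP
  obtain ⟨Q, rfl⟩ := hQ
  have h1 : (1 - e) * (1 - e) = 1 - e := by linear_combination he
  have h2 : (1 - e) * e = 0 := by linear_combination -he
  have h3 : e * (1 - e) = 0 := by linear_combination -he
  refine ⟨⟨_, (1 - e) • (↑P⁻¹ : B) + e • (↑Q⁻¹ : B), ?_, ?_⟩, rfl⟩ <;>
  · simp only [mul_add, add_mul, smul_mul_smul_comm, h1, h2, h3, he, zero_smul,
      Units.mul_inv, Units.inv_mul, add_zero, zero_add]
    rw [← add_smul]; simp

open Matrix in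
theorem glue_entry {A : Type*} [CommRing A] {n : ℕ} (e : A) (he : e * e = e)
    (N P P' Q Q' : Matrix (Fin n) (Fin n) A) :
    ((1 - e) • P + e • P') * N * ((1 - e) • Q + e • Q') =
      (1 - e) • (P * N * Q) + e • (P' * N * Q') := by
  have h1 : (1 - e) * (1 - e) = 1 - e := by linear_combination he
  have h2 : (1 - e) * e = 0 := by linear_combination -he
  have h3 : e * (1 - e) = 0 := by linear_combination -he
  simp only [mul_add, add_mul, smul_mul_assoc, mul_smul_comm, smul_add, smul_smul, h1, h2, h3, he,
    zero_smul, add_zero, zero_add]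

theorem swap_unit {A : Type*} [CommRing A] {n : ℕ} (i j : Fin n) :
    IsUnit (Matrix.swap A i j) :=
  ⟨⟨_, _, Matrix.swap_mul_self i j, Matrix.swap_mul_self i j⟩, rfl⟩

theorem pivot {A : Type*} [CommRing A] (hA : Tot A) {n : ℕ}
    (N : Matrix (Fin (n + 1)) (Fin (n + 1)) A) (s : Finset (Fin (n + 1) × Fin (n + 1))) :
    ∃ P Q : Matrix (Fin (n + 1)) (Fin (n + 1)) A, IsUnit P ∧ IsUnit Q ∧
      ∀ x ∈ s, (P * N * Q) 0 0 ∣ N x.1 x.2 := by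
  induction s using Finset.induction_on with
  | empty => exact ⟨1, 1, isUnit_one, isUnit_one, by simp⟩
  | insert x s _ ih =>
    obtain ⟨P, Q, hP, hQ, h⟩ := ih
    obtain ⟨e, he, ⟨r, hr⟩, ⟨t, ht⟩⟩ := hA ((P * N * Q) 0 0) (N x.1 x.2)
    refine ⟨_, _, glue_unit e he hP (swap_unit 0 x.1), glue_unit e he hQ (swap_unit 0 x.2), ?_⟩
    rw [glue_entry e he]
    have hsw : (Matrix.swap A 0 x.1 * N * Matrix.swap A 0 x.2) 0 0 = N x.1 x.2 := by
      simp
    simp only [Matrix.add_apply, Matrix.smul_apply, hsw, smul_eq_mul]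
    generalize (P * N * Q) 0 0 = g at *
    have hg : (1 - e) * g + e * N x.1 x.2 ∣ g :=
      ⟨(1 - e) + e * r, by linear_combination e * hr + (-2 * g + g * r + N x.1 x.2 - N x.1 x.2 * r) * he⟩
    have ha : (1 - e) * g + e * N x.1 x.2 ∣ N x.1 x.2 :=
      ⟨(1 - e) * t + e, by linear_combination (1 - e) * ht +
        (-g * t + g + N x.1 x.2 * t - 2 * N x.1 x.2) * he⟩
    intro z hz
    rcases Finset.mem_insert.1 hz with rfl | hz
    · exact ha
    · exact hg.trans (h z hz)

theorem dvd_mul_mul {A : Type*} [CommRing A] {n : ℕ} (g : A)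
    (P N Q : Matrix (Fin n) (Fin n) A) (h : ∀ i j, g ∣ N i j) (i j) : g ∣ (P * N * Q) i j := by
  rw [Matrix.mul_apply]
  refine Finset.dvd_sum fun k _ => Dvd.dvd.mul_right ?_ _
  rw [Matrix.mul_apply]
  exact Finset.dvd_sum fun l _ => Dvd.dvd.mul_left (h _ _) _

def block {A : Type*} [CommRing A] {n : ℕ} (g : A) (v w : Fin n → A)
    (N : Matrix (Fin n) (Fin n) A) : Matrix (Fin (n + 1)) (Fin (n + 1)) A :=
  Matrix.of (Fin.cons (Fin.cons g w) (fun i => Fin.cons (v i) (N i)))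

theorem block_mul {A : Type*} [CommRing A] {n : ℕ} (g g' : A) (v v' w w' : Fin n → A)
    (N N' : Matrix (Fin n) (Fin n) A) :
    block g v w N * block g' v' w' N' =
      block (g * g' + w ⬝ᵥ v') (fun i => v i * g' + N.mulVec v' i)
        (fun j => g * w' j + N'.vecMul w j) (Matrix.vecMulVec v w' + N * N') := by
  ext i j
  refine Fin.cases ?_ (fun i => ?_) i <;> refine Fin.cases ?_ (fun j => ?_) j <;>
    simp [block, Matrix.mul_apply, Fin.sum_univ_succ, dotProduct, Matrix.mulVec, Matrix.vecMul,
      Matrix.vecMulVec]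

theorem block_one {A : Type*} [CommRing A] {n : ℕ} : block (1 : A) (0 : Fin n → A) 0 1 = 1 := by
  ext i j
  refine Fin.cases ?_ (fun i => ?_) i <;> refine Fin.cases ?_ (fun j => ?_) j <;>
    simp [block, Matrix.one_apply, Fin.ext_iff]

theorem block_diag {A : Type*} [CommRing A] {n : ℕ} (g : A) (c : Fin n → A) :
    block g 0 0 (Matrix.diagonal c) = Matrix.diagonal (Fin.cons g c) := by
  ext i j
  refine Fin.cases ?_ (fun i => ?_) i <;> refine Fin.cases ?_ (fun j => ?_) j <;>
    simp [block, Matrix.diagonal_apply, Fin.ext_iff]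

theorem block_low_unit {A : Type*} [CommRing A] {n : ℕ} (v : Fin n → A) :
    IsUnit (block 1 v 0 1) := by
  refine ⟨⟨block 1 v 0 1, block 1 (-v) 0 1, ?_, ?_⟩, rfl⟩ <;>
  · rw [block_mul, ← block_one]
    congr 1 <;> first | (ext; simp; done) | simp

theorem block_up_unit {A : Type*} [CommRing A] {n : ℕ} (w : Fin n → A) :
    IsUnit (block 1 0 w 1) := by
  refine ⟨⟨block 1 0 w 1, block 1 0 (-w) 1, ?_, ?_⟩, rfl⟩ <;>
  · rw [block_mul, ← block_one]
    congr 1 <;> first | (ext; simp; done) | simp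

theorem block_diag_unit {A : Type*} [CommRing A] {n : ℕ} {P : Matrix (Fin n) (Fin n) A}
    (hP : IsUnit P) : IsUnit (block 1 0 0 P) := by
  obtain ⟨P, rfl⟩ := hP
  refine ⟨⟨block 1 0 0 (P : Matrix _ _ A), block 1 0 0 (↑P⁻¹ : Matrix _ _ A), ?_, ?_⟩, rfl⟩ <;>
  · rw [block_mul, ← block_one]
    congr 1 <;> first | (ext; simp; done) | simp

theorem clear {A : Type*} [CommRing A] {n : ℕ} (B : Matrix (Fin (n + 1)) (Fin (n + 1)) A)
    (h : ∀ i j, B 0 0 ∣ B i j) : ∃ (v w : Fin n → A) (N : Matrix (Fin n) (Fin n) A),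
      B = block 1 v 0 1 * block (B 0 0) 0 0 N * block 1 0 w 1 := by
  choose q hq using h
  refine ⟨fun i => q i.succ 0, fun j => q 0 j.succ,
    Matrix.of fun i j => B i.succ j.succ - q i.succ 0 * B 0 0 * q 0 j.succ, ?_⟩
  rw [block_mul, block_mul]
  ext i j
  refine Fin.cases ?_ (fun i => ?_) i <;> refine Fin.cases ?_ (fun j => ?_) j
  · simp [block]
  · simpa [block] using hq 0 j.succ
  · simpa [block, mul_comm] using hq i.succ 0
  · simp [block, Matrix.vecMulVec]

theorem smith {A : Type*} [CommRing A] (hA : Tot A) : ∀ {n : ℕ} (N : Matrix (Fin n) (Fin n) A),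
    ∃ (P Q : Matrix (Fin n) (Fin n) A) (c : Fin n → A), IsUnit P ∧ IsUnit Q ∧
      P * N * Q = Matrix.diagonal c ∧ ∀ i j, i ≤ j → c i ∣ c j
  | 0, N => ⟨1, 1, 0, isUnit_one, isUnit_one, by ext i; exact i.elim0, fun i => i.elim0⟩
  | n + 1, N => by
    obtain ⟨P, Q, hP, hQ, h⟩ := pivot hA N Finset.univ
    have hB : ∀ i j, (P * N * Q) 0 0 ∣ (P * N * Q) i j :=
      dvd_mul_mul _ P N Q (fun i j => h (i, j) (Finset.mem_univ _))
    obtain ⟨v, w, N', hN'⟩ := clear _ hB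
    obtain ⟨P', Q', c, hP', hQ', hc, hchain⟩ := smith hA N'
    set g := (P * N * Q) 0 0 with hg
    obtain ⟨L, hL⟩ := block_low_unit v
    obtain ⟨U, hU⟩ := block_up_unit w
    have hblock : (↑L⁻¹ : Matrix _ _ A) * (P * N * Q) * (↑U⁻¹ : Matrix _ _ A)
        = block g 0 0 N' := by
      rw [hN', ← hL, ← hU]
      simp [mul_assoc]
    have hgN : ∀ i j, g ∣ N' i j := by
      intro i j
      have := dvd_mul_mul g (↑L⁻¹ : Matrix _ _ A) (P * N * Q) (↑U⁻¹ : Matrix _ _ A) hB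
        i.succ j.succ
      rw [hblock] at this
      simpa [block] using this
    have hgc : ∀ i, g ∣ c i := by
      intro i
      have := dvd_mul_mul g P' N' Q' hgN i i
      rw [hc] at this
      simpa using this
    refine ⟨block 1 0 0 P' * (↑L⁻¹ : Matrix _ _ A) * P, Q * (↑U⁻¹ : Matrix _ _ A) * block 1 0 0 Q',
      Fin.cons g c, ((block_diag_unit hP').mul (Units.isUnit _)).mul hP,
      (hQ.mul (Units.isUnit _)).mul (block_diag_unit hQ'), ?_, ?_⟩
    · have : block 1 0 0 P' * (↑L⁻¹ : Matrix _ _ A) * P * N *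
          (Q * (↑U⁻¹ : Matrix _ _ A) * block 1 0 0 Q') =
          block 1 0 0 P' * ((↑L⁻¹ : Matrix _ _ A) * (P * N * Q) * (↑U⁻¹ : Matrix _ _ A)) *
            block 1 0 0 Q' := by simp only [mul_assoc]
      rw [this, hblock, block_mul, block_mul, ← block_diag, ← hc]
      congr 1 <;> first | (ext; simp; done) | (ext; simp [Matrix.vecMul, dotProduct]; done) | simp
    · intro i j
      refine Fin.cases ?_ (fun i => ?_) i <;> refine Fin.cases ?_ (fun j => ?_) j
      · simp
      · simpa using hgc j
      · simp
      · simpa using hchain i j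

theorem det_mem {R : Type*} [CommRing R] {n : ℕ} (a : Fin n → Ideal R)
    (E : Matrix (Fin n) (Fin n) R) (h : ∀ i j, E i j ∈ a i) : E.det ∈ ∏ i, a i := by
  rw [Matrix.det_apply]
  refine Submodule.sum_mem _ fun σ _ => ?_
  rw [← Equiv.prod_comp σ a, Units.smul_def, zsmul_eq_mul]
  exact Ideal.mul_mem_left _ _ (Ideal.prod_mem_prod fun i _ => h _ _)

theorem prod_le {R : Type*} [CommRing R] {ι : Type*} (s : Finset ι) (d : R) (c : ι → R) :
    ∏ i ∈ s, (Ideal.span {d} ⊔ Ideal.span {c i}) ≤ Ideal.span {d} ⊔ Ideal.span {∏ i ∈ s, c i} := by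
  classical
  induction s using Finset.induction_on with
  | empty => simp
  | insert x s hx ih =>
    rw [Finset.prod_insert hx, Finset.prod_insert hx]
    refine (Ideal.mul_mono_right ih).trans ?_
    generalize ∏ i ∈ s, c i = y
    rw [Ideal.mul_le]
    intro u hu v hv
    obtain ⟨u1, hu1, u2, hu2, rfl⟩ := Submodule.mem_sup.1 hu
    obtain ⟨v1, hv1, v2, hv2, rfl⟩ := Submodule.mem_sup.1 hv
    obtain ⟨u1, rfl⟩ := Ideal.mem_span_singleton.1 hu1
    obtain ⟨u2, rfl⟩ := Ideal.mem_span_singleton.1 hu2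
    obtain ⟨v1, rfl⟩ := Ideal.mem_span_singleton.1 hv1
    obtain ⟨v2, rfl⟩ := Ideal.mem_span_singleton.1 hv2
    exact Submodule.mem_sup.2 ⟨d * (u1 * (d * v1 + y * v2) + c x * u2 * v1),
      Ideal.mem_span_singleton.2 (Dvd.intro _ rfl), c x * y * (u2 * v2),
      Ideal.mem_span_singleton.2 (Dvd.intro _ rfl), by ring⟩

end Stmt18

theorem stmt_18 {R : Type*} [CommRing R] [IsDomain R]
    (hpruf : ∀ I : Ideal R, I.FG → I ≠ ⊥ →
      ∃ (J : Ideal R) (c : R), J.FG ∧ c ≠ 0 ∧ I * J = Ideal.span {c})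
    (hdim : ∀ p q r : Ideal R, p.IsPrime → q.IsPrime → r.IsPrime → p < q → q < r → False)
    {n : ℕ} (M : Matrix (Fin n) (Fin n) R) (hd : M.det ≠ 0) :
    ∃ a : Fin n → Ideal R,
      (∀ i j : Fin n, i ≤ j → a j ≤ a i) ∧
      (∀ i, M.det ∈ a i) ∧
      (∏ i, a i) = Ideal.span {M.det} ∧
      Nonempty (((Fin n → R) ⧸ LinearMap.range M.mulVecLin) ≃ₗ[R]
        ((i : Fin n) → R ⧸ a i)) := by
  classical
  set d := M.det with hdd
  set f := Ideal.Quotient.mk (Ideal.span {d}) with hf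
  have hf0 : ∀ x, f x = 0 ↔ d ∣ x := fun x => by
    rw [hf, Ideal.Quotient.eq_zero_iff_mem, Ideal.mem_span_singleton]
  have hfe : ∀ x y, f x = f y ↔ ∃ z, x = y + d * z := fun x y => by
    rw [← sub_eq_zero, ← map_sub, hf0]
    exact ⟨fun ⟨z, hz⟩ => ⟨z, by rw [← hz]; ring⟩, fun ⟨z, hz⟩ => ⟨z, by rw [hz]; ring⟩⟩
  have hfs : Function.Surjective f := Ideal.Quotient.mk_surjective
  obtain ⟨P, Q, c, hP, hQ, hc, hchain⟩ := Stmt18.smith (Stmt18.tot_quot hpruf hdim d hd) (M.map f)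
  obtain ⟨P, rfl⟩ := hP
  obtain ⟨Q, rfl⟩ := hQ
  have lift : ∀ N : Matrix (Fin n) (Fin n) (R ⧸ Ideal.span {d}),
      ∃ N' : Matrix (Fin n) (Fin n) R, N'.map f = N := fun N =>
    ⟨Matrix.of fun i j => (hfs (N i j)).choose, by
      ext i j; exact (hfs (N i j)).choose_spec⟩
  obtain ⟨p, hp⟩ := lift P
  obtain ⟨p', hp'⟩ := lift (↑P⁻¹ : Matrix _ _ _)
  obtain ⟨q, hq⟩ := lift Q
  obtain ⟨q', hq'⟩ := lift (↑Q⁻¹ : Matrix _ _ _)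
  obtain ⟨c, rfl⟩ : ∃ c' : Fin n → R, (fun i => f (c' i)) = c :=
    ⟨fun i => (hfs (c i)).choose, funext fun i => (hfs (c i)).choose_spec⟩
  -- matrix congruences
  have hmat : ∀ X Y : Matrix (Fin n) (Fin n) R, X.map f = Y.map f → ∃ Z, X = Y + d • Z := by
    intro X Y h
    have : ∀ i j, ∃ z, X i j = Y i j + d * z := fun i j => (hfe _ _).1 (congrFun (congrFun h i) j)
    choose Z hZ using this
    exact ⟨Matrix.of Z, by ext i j; simp [hZ i j]⟩
  have hdiag : (Matrix.diagonal c).map f = Matrix.diagonal fun i => f (c i) := by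
    rw [Matrix.diagonal_map (map_zero f)]
  obtain ⟨Z1, hZ1⟩ := hmat (p * M * q) (Matrix.diagonal c) (by
    rw [hdiag, Matrix.map_mul, Matrix.map_mul, hp, hq, hc])
  obtain ⟨Z2, hZ2⟩ := hmat (p * M) (Matrix.diagonal c * q') (by
    rw [Matrix.map_mul, Matrix.map_mul, hdiag, ← hc, hp, hq']; simp [mul_assoc])
  obtain ⟨Z3, hZ3⟩ := hmat (p' * Matrix.diagonal c) (M * q) (by
    rw [Matrix.map_mul, Matrix.map_mul, hdiag, ← hc, hp', hq]; simp [mul_assoc])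
  obtain ⟨Z4, hZ4⟩ := hmat (p * p') 1 (by
    rw [Matrix.map_mul, hp, hp', Matrix.map_one f (map_zero f) (map_one f)]; simp)
  obtain ⟨Z5, hZ5⟩ := hmat (p' * p) 1 (by
    rw [Matrix.map_mul, hp, hp', Matrix.map_one f (map_zero f) (map_one f)]; simp)
  have hdetf : ∀ X : Matrix (Fin n) (Fin n) R, f X.det = (X.map f).det := fun X => by
    rw [RingHom.map_det]; rfl
  let a : Fin n → Ideal R := fun i => Ideal.span {d} ⊔ Ideal.span {c i}
  have hda : ∀ i, d ∈ a i := fun i => Ideal.mem_sup_left (Ideal.mem_span_singleton_self d)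
  have hca : ∀ i, c i ∈ a i := fun i => Ideal.mem_sup_right (Ideal.mem_span_singleton_self _)
  have hmem : ∀ i x, x ∈ a i ↔ ∃ z w, x = c i * z + d * w := by
    intro i x
    constructor
    · intro hx
      obtain ⟨u, hu, v, hv, rfl⟩ := Submodule.mem_sup.1 hx
      obtain ⟨w, rfl⟩ := Ideal.mem_span_singleton.1 hu
      obtain ⟨z, rfl⟩ := Ideal.mem_span_singleton.1 hv
      exact ⟨z, w, add_comm _ _⟩
    · rintro ⟨z, w, rfl⟩
      exact (a i).add_mem ((a i).mul_mem_right _ (hca i)) ((a i).mul_mem_right _ (hda i))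
  refine ⟨a, ?_, hda, ?_, ?_⟩
  · intro i j hij
    refine sup_le ((Ideal.span_singleton_le_iff_mem _).2 (hda i))
      ((Ideal.span_singleton_le_iff_mem _).2 ?_)
    obtain ⟨t, ht⟩ := hchain i j hij
    obtain ⟨t, rfl⟩ := hfs t
    simp only [← map_mul] at ht
    obtain ⟨z, hz⟩ := (hfe _ _).1 ht
    exact (hmem i _).2 ⟨t, z, hz⟩
  · apply le_antisymm
    · refine (Stmt18.prod_le _ d c).trans (sup_le le_rfl ?_)
      rw [Ideal.span_singleton_le_iff_mem, Ideal.mem_span_singleton, ← hf0]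
      have h1 : f (∏ i, c i) = (Matrix.diagonal fun i => f (c i)).det := by
        rw [Matrix.det_diagonal, map_prod]
      rw [h1, ← hc, Matrix.det_mul, Matrix.det_mul, ← hdetf, (hf0 _).2 (dvd_refl d)]
      simp
    · rw [Ideal.span_singleton_le_iff_mem]
      have hE : (p * M * q).det ∈ ∏ i, a i := by
        apply Stmt18.det_mem
        intro i j
        rw [hZ1]
        refine (hmem i _).2 ⟨(1 : Matrix (Fin n) (Fin n) R) i j, Z1 i j, ?_⟩
        by_cases hij : i = j
        · subst hij; simp
        · simp [hij]
      rw [Matrix.det_mul, Matrix.det_mul, ← hdd] at hE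
      have hu : f (p.det * q.det * (p'.det * q'.det)) = f 1 := by
        simp only [map_mul, hdetf, hp, hq, hp', hq', map_one]
        have h1 : (P : Matrix (Fin n) (Fin n) (R ⧸ Ideal.span {d})).det * (↑P⁻¹ : Matrix (Fin n) (Fin n) (R ⧸ Ideal.span {d})).det = 1 := by
          rw [← Matrix.det_mul]; simp
        have h2 : (Q : Matrix (Fin n) (Fin n) (R ⧸ Ideal.span {d})).det * (↑Q⁻¹ : Matrix (Fin n) (Fin n) (R ⧸ Ideal.span {d})).det = 1 := by
          rw [← Matrix.det_mul]; simp
        linear_combination h1 * ((Q : Matrix (Fin n) (Fin n) (R ⧸ Ideal.span {d})).det * (↑Q⁻¹ : Matrix (Fin n) (Fin n) (R ⧸ Ideal.span {d})).det) + h2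
      obtain ⟨t, ht⟩ := (hfe _ _).1 hu
      have hdn : d ^ n ∈ ∏ i, a i := by
        have := Ideal.prod_mem_prod (s := Finset.univ) (I := a) (x := fun _ => d)
          (fun i _ => hda i)
        simpa using this
      have h1 : d * (1 + d * t) ∈ ∏ i, a i := by
        have := Ideal.mul_mem_right (p'.det * q'.det) _ hE
        rw [← ht]
        convert this using 1
        ring
      obtain ⟨w, hw⟩ := sub_dvd_pow_sub_pow (1 : R) (-(d * t)) n
      have h2 : d = d * (1 + d * t) * w + d ^ n * (d * (-t) ^ n) := by
        rw [one_pow, ← mul_neg, mul_pow] at hw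
        linear_combination d * hw
      rw [h2]
      exact Ideal.add_mem _ (Ideal.mul_mem_right _ _ h1) (Ideal.mul_mem_right _ _ hdn)
  · let F : (Fin n → R) →ₗ[R] ((i : Fin n) → R ⧸ a i) :=
      LinearMap.pi fun i => (Submodule.mkQ (a i)).comp ((LinearMap.proj i).comp p.mulVecLin)
    have hFapp : ∀ x i, F x i = Submodule.Quotient.mk (p.mulVec x i) := fun x i => rfl
    have hsurj : Function.Surjective F := by
      intro y
      choose x hx using fun i => Submodule.Quotient.mk_surjective (a i) (y i)
      refine ⟨p'.mulVec x, funext fun i => ?_⟩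
      rw [hFapp, ← hx i, Submodule.Quotient.eq, Matrix.mulVec_mulVec, hZ4, Matrix.add_mulVec,
        Matrix.one_mulVec, Matrix.smul_mulVec]
      simp only [Pi.add_apply, add_sub_cancel_left, Pi.smul_apply, smul_eq_mul]
      exact (a i).mul_mem_right _ (hda i)
    have hker : LinearMap.ker F = LinearMap.range M.mulVecLin := by
      ext x
      rw [LinearMap.mem_ker, LinearMap.mem_range]
      have hFx : F x = 0 ↔ ∀ i, p.mulVec x i ∈ a i := by
        rw [funext_iff]
        refine forall_congr' fun i => ?_
        rw [hFapp]
        exact Submodule.Quotient.mk_eq_zero _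
      rw [hFx]
      constructor
      · intro h
        choose z w hzw using fun i => (hmem i _).1 (h i)
        have h1 : p.mulVec x = (Matrix.diagonal c).mulVec z + d • w := by
          ext i; simp [hzw i, Matrix.mulVec_diagonal]
        have h2 : (p' * p).mulVec x =
            (M * q + d • Z3).mulVec z + d • p'.mulVec w := by
          rw [← Matrix.mulVec_mulVec, h1, Matrix.mulVec_add, Matrix.mulVec_mulVec, hZ3,
            Matrix.mulVec_smul]
        have hdv : ∀ v : Fin n → R, d • v = M.mulVec (M.adjugate.mulVec v) := fun v => by
          rw [Matrix.mulVec_mulVec, Matrix.mul_adjugate, Matrix.smul_mulVec, Matrix.one_mulVec]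
        have h3 : x = M.mulVec (q.mulVec z) + d • (Z3.mulVec z + p'.mulVec w - Z5.mulVec x) := by
          rw [hZ5, Matrix.add_mulVec, Matrix.add_mulVec, Matrix.one_mulVec, Matrix.smul_mulVec,
            Matrix.smul_mulVec, ← Matrix.mulVec_mulVec] at h2
          rw [smul_sub, smul_add, ← add_sub_assoc, ← add_assoc, ← h2, add_sub_cancel_right]
        refine ⟨q.mulVec z + M.adjugate.mulVec (Z3.mulVec z + p'.mulVec w - Z5.mulVec x), ?_⟩
        rw [Matrix.mulVecLin_apply, Matrix.mulVec_add, ← hdv, ← h3]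
      · rintro ⟨v, rfl⟩ i
        rw [Matrix.mulVecLin_apply, Matrix.mulVec_mulVec, hZ2, Matrix.add_mulVec,
          ← Matrix.mulVec_mulVec, Matrix.smul_mulVec]
        refine (hmem i _).2 ⟨q'.mulVec v i, Z2.mulVec v i, ?_⟩
        simp only [Pi.add_apply, Pi.smul_apply, smul_eq_mul, Matrix.mulVec_diagonal]
    exact ⟨(Submodule.quotEquivOfEq _ _ hker.symm).trans (F.quotKerEquivOfSurjective hsurj)⟩
end

section
/- Let R be a Prüfer domain of Krull dimension at most 1, let n ≤ m, and let M ∈ M_{n×m}(R) be a matrix whose determinantal ideal D_n(M) of order n is nonzero; let δ be a nonzero element of D_n(M). Then there exists a decreasing chain of ideals a_1 ⊇ a_2 ⊇ ⋯ ⊇ a_n of R such that δ ∈ a_i for every i, ∏_{i=1}^n a_i = D_n(M), and the cokernel R^n ⧸ range(M·(−)) of the linear map R^m → R^n, X ↦ M·X, is isomorphic to ⊕_{i=1}^n R/a_i. -/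
section ZeroDim
variable {A : Type*} [CommRing A]

/-- mixing two linear automorphisms along an idempotent -/
theorem mixEquiv {F : Type*} [AddCommGroup F] [Module A F] (e : A) (he : e * e = e)
    (g h : F ≃ₗ[A] F) : ∃ k : F ≃ₗ[A] F, ∀ x, k x = e • g x + (1 - e) • h x := by
  have key : ∀ g h : F ≃ₗ[A] F, ∀ x,
      e • g (e • g.symm x + (1 - e) • h.symm x) + (1 - e) • h (e • g.symm x + (1 - e) • h.symm x) = x := by
    intro g h x
    have h1 : e * (1 - e) = 0 := by rw [mul_sub, he]; ring
    have h2 : (1 - e) * e = 0 := by rw [mul_comm, h1]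
    have h3 : (1 - e) * (1 - e) = 1 - e := by linear_combination he
    simp only [map_add, map_smul, smul_add, smul_smul, LinearEquiv.apply_symm_apply, he, h1, h2, h3,
      zero_smul, add_zero, zero_add, ← add_smul]
    rw [add_sub_cancel, one_smul]
  refine ⟨LinearEquiv.ofLinearMap (e • g.toLinearMap + (1 - e) • h.toLinearMap)
    (e • g.symm.toLinearMap + (1 - e) • h.symm.toLinearMap) ?_ ?_, ?_⟩
  · ext x; simpa using key g h x
  · ext x; simpa using key g.symm h.symm x
  · intro x; simp

theorem pivot_s19 (hA : ∀ x y : A, ∃ e : A, e * e = e ∧ e * x + (1 - e) * y ∣ x ∧ e * x + (1 - e) * y ∣ y)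
    {n : ℕ} (N : Submodule A (Fin (n+1) → A)) (hN : N.FG) :
    ∃ (g : (Fin (n+1) → A) ≃ₗ[A] (Fin (n+1) → A)), ∃ x ∈ N, ∀ y ∈ N, ∀ i, g x 0 ∣ y i := by
  classical
  have main : ∀ T : Finset A,
      (∀ t ∈ T, ∃ (g : (Fin (n+1) → A) ≃ₗ[A] (Fin (n+1) → A)), ∃ x ∈ N, t = g x 0) →
      ∃ (g : (Fin (n+1) → A) ≃ₗ[A] (Fin (n+1) → A)), ∃ x ∈ N, ∀ t ∈ T, g x 0 ∣ t := by
    intro T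
    induction T using Finset.induction_on with
    | empty => intro _; exact ⟨LinearEquiv.refl A _, 0, N.zero_mem, by simp⟩
    | insert a T ha ih =>
      intro h
      obtain ⟨g, x, hx, hg⟩ := ih (fun t ht => h t (Finset.mem_insert_of_mem ht))
      obtain ⟨g', x', hx', rfl⟩ := h a (Finset.mem_insert_self _ _)
      obtain ⟨e, he, h1, h2⟩ := hA (g x 0) (g' x' 0)
      obtain ⟨k, hk⟩ := mixEquiv e he g g'
      have hval : k (e • x + (1 - e) • x') 0 = e * g x 0 + (1 - e) * g' x' 0 := by
        rw [hk]
        simp only [map_add, map_smul, Pi.add_apply, Pi.smul_apply, smul_eq_mul]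
        linear_combination (g x 0 - g x' 0 - g' x 0 + g' x' 0) * he
      refine ⟨k, e • x + (1 - e) • x', N.add_mem (N.smul_mem _ hx) (N.smul_mem _ hx'), ?_⟩
      rw [hval]
      intro t ht
      rcases Finset.mem_insert.1 ht with rfl | ht
      · exact h2
      · exact h1.trans (hg t ht)
  obtain ⟨s, rfl⟩ := hN
  obtain ⟨g, x, hx, h⟩ := main ((s ×ˢ Finset.univ).image (fun p : (Fin (n+1) → A) × Fin (n+1) => p.1 p.2)) (by
    intro t ht
    obtain ⟨⟨y, i⟩, hp, rfl⟩ := Finset.mem_image.1 ht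
    refine ⟨LinearEquiv.funCongrLeft A A (Equiv.swap 0 i), y, Submodule.subset_span (Finset.mem_product.1 hp).1, ?_⟩
    simp [LinearEquiv.funCongrLeft_apply])
  refine ⟨g, x, hx, ?_⟩
  intro y hy
  induction hy using Submodule.span_induction with
  | mem y hy =>
    intro i
    exact h _ (Finset.mem_image.2 ⟨(y, i), Finset.mem_product.2 ⟨hy, Finset.mem_univ _⟩, rfl⟩)
  | zero => intro i; exact dvd_zero _
  | add y z _ _ h1 h2 => intro i; exact dvd_add (h1 i) (h2 i)
  | smul a y _ h1 => intro i; exact (h1 i).mul_left a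

theorem consEquiv {n : ℕ} (w : Fin n → A) (g : (Fin n → A) ≃ₗ[A] (Fin n → A)) :
    ∃ k : (Fin (n+1) → A) ≃ₗ[A] (Fin (n+1) → A),
      ∀ y, k y = Fin.cons (y 0) (g (Fin.tail y - y 0 • w)) := by
  refine ⟨{ toFun := fun y => Fin.cons (y 0) (g (Fin.tail y - y 0 • w))
            invFun := fun y => Fin.cons (y 0) (g.symm (Fin.tail y) + y 0 • w)
            map_add' := ?_
            map_smul' := ?_
            left_inv := ?_
            right_inv := ?_ }, fun y => rfl⟩
  · intro x y
    have : Fin.tail (x + y) - (x + y) 0 • w = (Fin.tail x - x 0 • w) + (Fin.tail y - y 0 • w) := by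
      ext i; simp [Fin.tail]; ring
    simp only [this, map_add]
    ext i
    refine Fin.cases ?_ (fun i => ?_) i <;> simp
  · intro a y
    have : Fin.tail (a • y) - (a • y) 0 • w = a • (Fin.tail y - y 0 • w) := by
      ext i; simp [Fin.tail]; ring
    simp only [this, map_smul]
    ext i
    refine Fin.cases ?_ (fun i => ?_) i <;> simp
  · intro y
    simp
  · intro y
    simp

theorem diagN (hA : ∀ x y : A, ∃ e : A, e * e = e ∧ e * x + (1 - e) * y ∣ x ∧ e * x + (1 - e) * y ∣ y) :
    ∀ (n : ℕ) (N : Submodule A (Fin n → A)), N.FG → ∀ c : A, (∀ y ∈ N, ∀ i, c ∣ y i) →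
    ∃ (g : (Fin n → A) ≃ₗ[A] (Fin n → A)) (d : Fin n → A), (∀ i, c ∣ d i) ∧
      (∀ i j, i ≤ j → d i ∣ d j) ∧ ∀ y, y ∈ N ↔ ∀ i, d i ∣ g y i := by
  intro n
  induction n with
  | zero =>
    intro N _ c _
    refine ⟨LinearEquiv.refl A _, Fin.elim0, fun i => i.elim0, fun i => i.elim0, fun y => ?_⟩
    have : y = 0 := Subsingleton.elim _ _
    exact ⟨fun _ i => i.elim0, fun _ => by rw [this]; exact N.zero_mem⟩
  | succ n ih =>
    intro N hN c hc
    obtain ⟨g, x, hx, hdiv⟩ := pivot_s19 hA N hN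
    set d := g x 0 with hd
    have hgd : ∀ y ∈ N, ∃ y', g y = d • y' := by
      intro y hy
      choose z hz using hdiv y hy
      have : y = d • z := funext hz
      exact ⟨g z, by rw [← map_smul, ← this]⟩
    have hcd : c ∣ d := by
      choose z hz using hc x hx
      have : x = c • z := funext hz
      rw [hd, this, map_smul]
      exact Dvd.intro _ rfl
    obtain ⟨x', hx'⟩ := hgd x hx
    have hdx : d * x' 0 = d := by
      have := congrFun hx' 0
      simpa using this.symm
    -- normalise
    obtain ⟨v, hv, hv0⟩ : ∃ v : Fin (n+1) → A, g x = d • v ∧ v 0 = 1 := by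
      refine ⟨x' + (1 - x' 0) • Pi.single 0 1, ?_, by simp⟩
      rw [smul_add, smul_smul, mul_sub, hdx, mul_one, sub_self, zero_smul, add_zero, hx']
    let ψ : (Fin (n+1) → A) →ₗ[A] (Fin n → A) :=
      { toFun := fun y => Fin.tail y - y 0 • Fin.tail v
        map_add' := by intro x y; ext i; simp [Fin.tail]; ring
        map_smul' := by intro x y; ext i; simp [Fin.tail]; ring }
    have hψ : ∀ y, ψ y = Fin.tail y - y 0 • Fin.tail v := fun y => rfl
    obtain ⟨g', d', h1, h2, h3⟩ := ih (N.map (ψ ∘ₗ g.toLinearMap)) (hN.map _) d (by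
      rintro _ ⟨y, hy, rfl⟩ i
      obtain ⟨y', hy'⟩ := hgd y hy
      refine ⟨ψ y' i, ?_⟩
      simp [hy'])
    obtain ⟨k, hk⟩ := consEquiv (Fin.tail v) g'
    refine ⟨g.trans k, Fin.cons d d', ?_, ?_, ?_⟩
    · intro i
      refine Fin.cases ?_ (fun i => ?_) i
      · simpa using hcd
      · simpa using hcd.trans (h1 i)
    · intro i j
      refine Fin.cases ?_ (fun i => ?_) i <;> refine Fin.cases ?_ (fun j => ?_) j
      · simp
      · intro _; simpa using h1 j
      · intro h; exact absurd h (by simp)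
      · intro h; simpa using h2 i j (by simpa using h)
    · intro y
      rw [Fin.forall_fin_succ]
      simp only [LinearEquiv.trans_apply, hk, Fin.cons_zero, Fin.cons_succ, ← hψ]
      rw [← h3]
      constructor
      · intro hy
        refine ⟨?_, ⟨y, hy, rfl⟩⟩
        obtain ⟨y', hy'⟩ := hgd y hy
        rw [hy']; exact Dvd.intro _ rfl
      · rintro ⟨⟨a, ha⟩, ⟨z, hz, hzy⟩⟩
        obtain ⟨z', hz'⟩ := hgd z hz
        have hzy' : ψ (g z) = ψ (g y) := hzy
        have : y = z + (a - z' 0) • x := by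
          apply g.injective
          rw [map_add, map_smul, hv]
          ext i
          refine Fin.cases ?_ (fun i => ?_) i
          · simp [ha, hz', hv0]; ring
          · have h4 := congrFun hzy' i
            have h5 : g z 0 = d * z' 0 := by rw [hz']; rfl
            simp only [hψ, Pi.sub_apply, Fin.tail, Pi.smul_apply, smul_eq_mul] at h4
            rw [ha, h5] at h4
            simp only [Pi.add_apply, Pi.smul_apply, smul_eq_mul]
            linear_combination -h4
        rw [this]
        exact N.add_mem hz (N.smul_mem _ hx)

theorem mix_of (hz : ∀ s : A, ∃ (k : ℕ) (t : A), s ^ k * (1 - s * t) = 0)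
    (ha : ∀ x y : A, ∃ s a b : A, s * x = a * y ∧ (1 - s) * y = b * x) (x y : A) :
    ∃ e : A, e * e = e ∧ e * x + (1 - e) * y ∣ x ∧ e * x + (1 - e) * y ∣ y := by
  obtain ⟨s, a, b, h1, h2⟩ := ha x y
  obtain ⟨k, t, hk⟩ := hz s
  -- f = (s t)^(k+1) idempotent
  have hk1 : s ^ k * (s * t) = s ^ k := by linear_combination -hk
  have hpow : ∀ j : ℕ, s ^ k * (s * t) ^ j = s ^ k := by
    intro j
    induction j with
    | zero => simp
    | succ j ih => rw [pow_succ, ← mul_assoc, ih, hk1]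
  obtain ⟨f, hf, w, hw, hkf⟩ : ∃ f : A, f * f = f ∧ ∃ w, f = s * w ∧ s ^ k * (1 - f) = 0 := by
    refine ⟨(s * t) ^ (k + 1), ?_, t * (s * t) ^ k, by ring, ?_⟩
    · have := hpow (k + 1)
      calc (s * t) ^ (k+1) * (s * t) ^ (k+1) = (s ^ k * (s * t) ^ (k+1)) * (s * t ^ (k+1)) := by ring
        _ = _ := by rw [this]; ring
    · rw [mul_sub, hpow, mul_one, sub_self]
  obtain ⟨q, hq⟩ : ∃ q, 1 - s ^ k = (1 - s) * q := by
    have := sub_dvd_pow_sub_pow 1 s k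
    rwa [one_pow] at this
  -- on f: f x = w a y ; on 1 - f: (1 - f) y = q b (1 - f) x
  have hx : f * x = w * a * y := by rw [hw]; linear_combination w * h1
  have hy : (1 - f) * y = q * b * (1 - f) * x := by
    linear_combination (1 - f) * y * hq + (1 - f) * q * h2 + y * hkf
  refine ⟨1 - f, by linear_combination hf, ?_, ?_⟩
  · refine ⟨(1 - f) + w * a * f, ?_⟩
    linear_combination f ^ 2 * hx + (-x + w * a * x + y - (f + 1) * x) * hf
  · refine ⟨f + q * b * (1 - f), ?_⟩
    linear_combination (1 - f) * hy + (x + q * b * y - 2 * y) * hf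

end ZeroDim

section Arith
variable {R : Type*} [CommRing R] [IsDomain R]

theorem arith_pair (hpruf : ∀ I : Ideal R, I.FG → I ≠ ⊥ →
      ∃ (J : Ideal R) (c : R), J.FG ∧ c ≠ 0 ∧ I * J = Ideal.span {c}) (x y : R) :
    ∃ s a b : R, s * x = a * y ∧ (1 - s) * y = b * x := by
  by_cases hI : Ideal.span {x} ⊔ Ideal.span {y} = (⊥ : Ideal R)
  · rw [sup_eq_bot_iff, Ideal.span_singleton_eq_bot, Ideal.span_singleton_eq_bot] at hI
    exact ⟨0, 0, 0, by simp [hI.1, hI.2], by simp [hI.1, hI.2]⟩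
  obtain ⟨J, c, -, hc, hJ⟩ := hpruf _
    (Submodule.FG.sup (Submodule.fg_span_singleton x) (Submodule.fg_span_singleton y)) hI
  have hcm : c ∈ (Ideal.span {x} ⊔ Ideal.span {y}) * J := by
    rw [hJ]; exact Ideal.mem_span_singleton_self c
  rw [Ideal.sup_mul] at hcm
  obtain ⟨p, hp, q, hq, hpq⟩ := Submodule.mem_sup.1 hcm
  obtain ⟨u, hu, rfl⟩ := Ideal.mem_span_singleton_mul.1 hp
  obtain ⟨v, hv, rfl⟩ := Ideal.mem_span_singleton_mul.1 hq
  have hX : ∀ w ∈ J, c ∣ x * w := fun w hw => by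
    rw [← Ideal.mem_span_singleton, ← hJ]
    exact Ideal.mul_mem_mul (Ideal.mem_sup_left (Ideal.mem_span_singleton_self x)) hw
  have hY : ∀ w ∈ J, c ∣ y * w := fun w hw => by
    rw [← Ideal.mem_span_singleton, ← hJ]
    exact Ideal.mul_mem_mul (Ideal.mem_sup_right (Ideal.mem_span_singleton_self y)) hw
  obtain ⟨s1, h1⟩ := hX u hu
  obtain ⟨α, h2⟩ := hX v hv
  obtain ⟨β, h3⟩ := hY u hu
  obtain ⟨s2, h4⟩ := hY v hv
  refine ⟨s2, α, β, mul_left_cancel₀ hc ?_, mul_left_cancel₀ hc ?_⟩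
  · linear_combination -x * h4 + y * h2
  · linear_combination x * h3 - y * hpq + y * h4

theorem zero_dim (hdim : ∀ p q r : Ideal R, p.IsPrime → q.IsPrime → r.IsPrime → p < q → q < r → False)
    (δ : R) (hδ : δ ≠ 0) (s : R) : ∃ (k : ℕ) (t : R), s ^ k * (1 - s * t) ∈ Ideal.span {δ} := by
  by_contra hcon
  push Not at hcon
  let T : Submonoid R :=
    { carrier := {z | ∃ (k : ℕ) (t : R), z = s ^ k * (1 - s * t)}
      one_mem' := ⟨0, 0, by simp⟩
      mul_mem' := by
        rintro _ _ ⟨k, t, rfl⟩ ⟨l, u, rfl⟩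
        exact ⟨k + l, t + u - s * t * u, by ring⟩ }
  obtain ⟨p, hp, hle, hdis⟩ := Ideal.exists_le_prime_disjoint (Ideal.span {δ}) T (by
    rw [Set.disjoint_left]
    rintro z hz ⟨k, t, rfl⟩
    exact hcon k t hz)
  rw [Set.disjoint_left] at hdis
  have hs : s ∉ p := fun h => hdis h ⟨1, 0, by simp⟩
  have hne : p ⊔ Ideal.span {s} ≠ ⊤ := by
    intro h
    obtain ⟨a, ha, b, hb, hab⟩ := Submodule.mem_sup.1 ((Ideal.eq_top_iff_one _).1 h)
    obtain ⟨t, rfl⟩ := Ideal.mem_span_singleton'.1 hb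
    exact hdis ha ⟨0, t, by rw [← hab]; ring⟩
  obtain ⟨q, hq, hpq⟩ := Ideal.exists_le_maximal _ hne
  refine hdim ⊥ p q Ideal.isPrime_bot hp hq.isPrime ?_ ?_
  · rw [bot_lt_iff_ne_bot]
    rintro rfl
    exact hδ (by simpa using hle (Ideal.mem_span_singleton_self δ))
  · refine lt_of_le_of_ne (le_sup_left.trans hpq) ?_
    rintro rfl
    exact hs (hpq (Ideal.mem_sup_right (Ideal.mem_span_singleton_self s)))

end Arith

section Fitt
variable {R : Type*} [CommRing R]

/-- ideal generated by the determinants of `n`-tuples of elements of `N` -/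
def fitN {n : ℕ} (N : Submodule R (Fin n → R)) : Ideal R :=
  Ideal.span {x | ∃ V : Matrix (Fin n) (Fin n) R, (∀ i, V i ∈ N) ∧ x = V.det}

theorem detIdeal_eq_fitN {n m : ℕ} (M : Matrix (Fin n) (Fin m) R) :
    detIdeal M n = fitN (LinearMap.range M.mulVecLin) := by
  apply le_antisymm
  · refine Ideal.span_le.2 ?_
    rintro _ ⟨r, c, rfl⟩
    have : M.submatrix r c = ((1 : Matrix (Fin n) (Fin n) R).submatrix r id) * M.submatrix id c := by
      ext i j
      simp [Matrix.mul_apply, Matrix.one_apply]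
    rw [this, Matrix.det_mul]
    refine Ideal.mul_mem_left _ _ (Ideal.subset_span ⟨(M.submatrix id c).transpose, ?_, ?_⟩)
    · intro i
      refine ⟨Pi.single (c i) 1, ?_⟩
      ext j
      simp
    · rw [Matrix.det_transpose]
  · refine Ideal.span_le.2 ?_
    rintro _ ⟨V, hV, rfl⟩
    choose w hw using hV
    have hV' : V = fun i => ∑ j, w i j • M.transpose j := by
      ext i k
      rw [← hw i]
      simp [Matrix.mulVec, dotProduct, mul_comm]
    have h := (Matrix.detRowAlternating (n := Fin n) (R := R)).toMultilinearMap.map_sum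
      (fun i (j : Fin m) => w i j • M.transpose j)
    have h' : V.det = ∑ c : Fin n → Fin m, (∏ i, w i (c i)) * (M.submatrix id c).det := by
      have e1 : V.det = (Matrix.detRowAlternating (n := Fin n) (R := R)).toMultilinearMap
          (fun i => ∑ j, w i j • M.transpose j) := by rw [← hV']; rfl
      rw [e1, h]
      refine Finset.sum_congr rfl fun c _ => ?_
      rw [MultilinearMap.map_smul_univ, smul_eq_mul, ← Matrix.det_transpose (M.submatrix id c)]
      rfl
    rw [h']
    exact Ideal.sum_mem _ fun c _ => Ideal.mul_mem_left _ _ (Ideal.subset_span ⟨id, c, rfl⟩)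

theorem fitN_smul {n : ℕ} (N : Submodule R (Fin n → R)) (x : R) (hx : x ∈ fitN N)
    (w : Fin n → R) : x • w ∈ N := by
  induction hx using Submodule.span_induction with
  | mem x hx =>
    obtain ⟨V, hV, rfl⟩ := hx
    have : V.det • w = Matrix.vecMul (Matrix.vecMul w V.adjugate) V := by
      rw [Matrix.vecMul_vecMul, Matrix.adjugate_mul, Matrix.vecMul_smul, Matrix.vecMul_one]
    rw [this, Matrix.vecMul_eq_sum]
    exact N.sum_mem fun i _ => N.smul_mem _ (hV i)
  | zero => simp
  | add y z _ _ h1 h2 => rw [add_smul]; exact N.add_mem h1 h2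
  | smul a y _ h1 => rw [smul_assoc]; exact N.smul_mem _ h1

theorem fitN_le {n : ℕ} (N N' : Submodule R (Fin n → R)) (P : Matrix (Fin n) (Fin n) R) (δ : R)
    (hP : ∀ x ∈ N, P.mulVec x ∈ N') (hco : IsCoprime P.det δ)
    (hδ : ∀ w : Fin n → R, δ • w ∈ N') : fitN N ≤ fitN N' := by
  refine Ideal.span_le.2 ?_
  rintro _ ⟨V, hV, rfl⟩
  obtain ⟨u, v, huv⟩ := hco.pow_right (n := n)
  have h1 : (V * P.transpose).det ∈ fitN N' := by
    refine Ideal.subset_span ⟨_, fun i => ?_, rfl⟩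
    have : (V * P.transpose) i = P.mulVec (V i) := by
      ext j
      simp [Matrix.mul_apply, Matrix.mulVec, dotProduct, mul_comm]
    rw [this]
    exact hP _ (hV i)
  have h2 : δ ^ n ∈ fitN N' := by
    refine Ideal.subset_span ⟨δ • (1 : Matrix (Fin n) (Fin n) R), fun i => hδ _, ?_⟩
    simp
  have : V.det = u * (V * P.transpose).det + (v * V.det) * δ ^ n := by
    rw [Matrix.det_mul, Matrix.det_transpose]
    linear_combination -V.det * huv
  rw [this]
  exact Ideal.add_mem _ (Ideal.mul_mem_left _ _ h1) (Ideal.mul_mem_left _ _ h2)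

theorem fitN_pi {n : ℕ} (a : Fin n → Ideal R) (N : Submodule R (Fin n → R))
    (hN : ∀ y, y ∈ N ↔ ∀ i, y i ∈ a i) : fitN N = ∏ i, a i := by
  apply le_antisymm
  · refine Ideal.span_le.2 ?_
    rintro _ ⟨V, hV, rfl⟩
    rw [Matrix.det_apply]
    refine Ideal.sum_mem _ fun σ _ => ?_
    refine Submodule.smul_of_tower_mem _ _ ?_
    exact Ideal.prod_mem_prod fun i _ => (hN _).1 (hV _) i
  · have : ∏ i, a i = ∏ i, Ideal.span (a i : Set R) := by simp
    rw [this, Ideal.prod_span]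
    refine Ideal.span_le.2 ?_
    intro x hx
    rw [Set.mem_fintype_prod] at hx
    obtain ⟨f, hf, rfl⟩ := hx
    refine Ideal.subset_span ⟨Matrix.diagonal f, fun i => (hN _).2 fun j => ?_, by simp⟩
    by_cases h : i = j
    · subst h; simpa using hf i
    · simp [Matrix.diagonal_apply_ne _ h]

end Fitt

theorem stmt_19 {R : Type*} [CommRing R] [IsDomain R]
    (hpruf : ∀ I : Ideal R, I.FG → I ≠ ⊥ →
      ∃ (J : Ideal R) (c : R), J.FG ∧ c ≠ 0 ∧ I * J = Ideal.span {c})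
    (hdim : ∀ p q r : Ideal R, p.IsPrime → q.IsPrime → r.IsPrime → p < q → q < r → False)
    {n m : ℕ} (hnm : n ≤ m) (M : Matrix (Fin n) (Fin m) R)
    (hD : detIdeal M n ≠ ⊥) (δ : R) (hδ0 : δ ≠ 0) (hδ : δ ∈ detIdeal M n) :
    ∃ a : Fin n → Ideal R,
      (∀ i j : Fin n, i ≤ j → a j ≤ a i) ∧
      (∀ i, δ ∈ a i) ∧
      (∏ i, a i) = detIdeal M n ∧
      Nonempty (((Fin n → R) ⧸ LinearMap.range M.mulVecLin) ≃ₗ[R]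
        ((i : Fin n) → R ⧸ a i)) := by
  classical
  set A := R ⧸ Ideal.span {δ} with hAdef
  let π : R →+* A := Ideal.Quotient.mk _
  have hπ : Function.Surjective π := Ideal.Quotient.mk_surjective
  have hπ0 : ∀ x, π x = 0 ↔ δ ∣ x := fun x =>
    Ideal.Quotient.eq_zero_iff_mem.trans Ideal.mem_span_singleton
  have hA := mix_of (A := A) (by
      intro s
      obtain ⟨s, rfl⟩ := hπ s
      obtain ⟨k, t, h⟩ := zero_dim hdim δ hδ0 s
      refine ⟨k, π t, ?_⟩
      have := Ideal.Quotient.eq_zero_iff_mem.2 h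
      simpa using this) (by
      intro x y
      obtain ⟨x, rfl⟩ := hπ x
      obtain ⟨y, rfl⟩ := hπ y
      obtain ⟨s, a, b, h1, h2⟩ := arith_pair hpruf x y
      refine ⟨π s, π a, π b, ?_, ?_⟩
      · rw [← map_mul, h1, map_mul]
      · rw [← map_mul, ← h2, map_mul, map_sub, map_one])
  rw [detIdeal_eq_fitN] at hδ ⊢
  set N := LinearMap.range M.mulVecLin with hNdef
  have hδN := fitN_smul N δ hδ
  -- reduction of the range modulo δ
  let NA : Submodule A (Fin n → A) := LinearMap.range (M.map π).mulVecLin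
  have hNA : ∀ x : Fin n → R, (π ∘ x) ∈ NA ↔ x ∈ N := by
    intro x
    constructor
    · rintro ⟨w, hw⟩
      choose w' hw' using fun i => hπ (w i)
      have hw2 : w = π ∘ w' := by ext i; exact (hw' i).symm
      have h1 : ∀ i, δ ∣ (x - M.mulVec w') i := by
        intro i
        rw [← hπ0, Pi.sub_apply, map_sub, RingHom.map_mulVec, ← hw2]
        have := congrFun hw i
        rw [Matrix.mulVecLin_apply] at this
        rw [this]
        simp
      choose z hz using h1
      have h2 : x = M.mulVec w' + δ • z := by
        ext i
        have := hz i
        simp only [Pi.sub_apply] at this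
        simp only [Pi.add_apply, Pi.smul_apply, smul_eq_mul, ← this]
        ring
      rw [h2]
      exact N.add_mem ⟨w', rfl⟩ (hδN z)
    · rintro ⟨w, rfl⟩
      refine ⟨π ∘ w, ?_⟩
      ext i
      simp [RingHom.map_mulVec]
  obtain ⟨g, d, -, hd, hg⟩ := diagN hA n NA
    (by rw [show NA = Submodule.map (M.map π).mulVecLin ⊤ from (Submodule.map_top _).symm]
        exact Module.Finite.fg_top.map _) 1 (fun y _ i => one_dvd _)
  -- lifting matrices
  have lift : ∀ g : (Fin n → A) ≃ₗ[A] (Fin n → A), ∃ P : Matrix (Fin n) (Fin n) R,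
      (∀ x, π ∘ (P.mulVec x) = g (π ∘ x)) ∧ IsCoprime P.det δ := by
    intro g
    choose P hP using fun i j => hπ (LinearMap.toMatrix' g.toLinearMap i j)
    have hPm : (Matrix.of P).map π = LinearMap.toMatrix' g.toLinearMap := by
      ext i j; exact hP i j
    refine ⟨Matrix.of P, fun x => ?_, ?_⟩
    · have : π ∘ ((Matrix.of P).mulVec x) = ((Matrix.of P).map π).mulVec (π ∘ x) := by
        ext i; simp [RingHom.map_mulVec]
      rw [this, hPm, LinearMap.toMatrix'_mulVec]
      rfl
    · have hu : IsUnit (π (Matrix.of P).det) := by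
        rw [RingHom.map_det, RingHom.mapMatrix_apply, hPm, LinearMap.det_toMatrix']
        exact LinearEquiv.isUnit_det' g
      obtain ⟨v, hv⟩ := hu.exists_left_inv
      obtain ⟨v, rfl⟩ := hπ v
      have h0 : δ ∣ 1 - v * (Matrix.of P).det := by
        rw [← hπ0, map_sub, map_mul, hv, map_one, sub_self]
      obtain ⟨z, hz⟩ := h0
      exact ⟨v, z, by linear_combination -hz⟩
  obtain ⟨P, hP, hPc⟩ := lift g
  obtain ⟨Q, hQ, hQc⟩ := lift g.symm
  let a : Fin n → Ideal R := fun i => (Ideal.span {d i}).comap π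
  have ha : ∀ i x, x ∈ a i ↔ d i ∣ π x := fun i x => by
    rw [Ideal.mem_comap, Ideal.mem_span_singleton]
  have hδa : ∀ i, δ ∈ a i := fun i => by
    rw [ha, (hπ0 δ).2 dvd_rfl]; exact dvd_zero _
  let N' : Submodule R (Fin n → R) := Submodule.pi Set.univ a
  have hN' : ∀ y, y ∈ N' ↔ ∀ i, y i ∈ a i := fun y => by simp [N', Submodule.mem_pi]
  have hPN : ∀ x, P.mulVec x ∈ N' ↔ x ∈ N := by
    intro x
    rw [hN', ← hNA, hg]
    refine forall_congr' fun i => ?_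
    rw [ha, ← hP]; rfl
  have hQN : ∀ x ∈ N', Q.mulVec x ∈ N := by
    intro x hx
    rw [← hNA, hg, hQ, LinearEquiv.apply_symm_apply]
    intro i
    exact (ha i _).1 ((hN' x).1 hx i)
  refine ⟨a, ?_, hδa, ?_, ?_⟩
  · intro i j hij x hx
    rw [ha] at hx ⊢
    exact (hd i j hij).trans hx
  · rw [← fitN_pi a N' hN']
    apply le_antisymm
    · exact fitN_le N' N Q δ hQN hQc hδN
    · refine fitN_le N N' P δ (fun x hx => (hPN x).2 hx) hPc fun w => ?_
      rw [hN']
      intro i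
      exact Ideal.mul_mem_right _ _ (hδa i)
  · let φ : (Fin n → R) →ₗ[R] ((i : Fin n) → R ⧸ a i) :=
      (LinearMap.pi fun i => (a i).mkQ ∘ₗ LinearMap.proj i) ∘ₗ P.mulVecLin
    have hφ : ∀ x i, φ x i = Ideal.Quotient.mk (a i) (P.mulVec x i) := fun x i => rfl
    have hker : LinearMap.ker φ = N := by
      ext x
      rw [LinearMap.mem_ker, ← hPN, hN', funext_iff]
      refine forall_congr' fun i => ?_
      rw [hφ]
      exact Ideal.Quotient.eq_zero_iff_mem
    have hsurj : Function.Surjective φ := by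
      intro y
      choose z hz using fun i => Ideal.Quotient.mk_surjective (I := a i) (y i)
      refine ⟨Q.mulVec z, ?_⟩
      ext i
      rw [hφ, ← hz i, Ideal.Quotient.eq, ha, map_sub]
      have h1 := congrFun (hP (Q.mulVec z)) i
      rw [hQ, LinearEquiv.apply_symm_apply] at h1
      have h2 : π (P.mulVec (Q.mulVec z) i) = π (z i) := h1
      rw [h2, sub_self]
      exact dvd_zero _
    rw [← hker]
    exact ⟨φ.quotKerEquivOfSurjective hsurj⟩
end
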